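/- arXiv:1812.09753 — 3 statements merged into one kernel-verified Lean document; each statement's English description precedes it below -/
import Mathlib

section
/- Let n ≥ 2 and 0 < D < π, and let z ∈ S^n. If X ⊆ S^n is a Borel measurable set with geodesic diameter diam X ≤ D, then σ(X) ≤ σ(B(z, D/2)). -/
/-!
The proof is by two-point symmetrization (polarization). For a hyperplane through the origin with
reflection `τ` and a chosen closed half-space, the polarization of a closed set `K` replaces each
point of `K` outside the half-space by its mirror image, unless that image already lies in `K`.
This does not increase the diameter (`le_inner_of_mem_polar`) or decrease the volume, and if a
ball `C` has its centre in the half-space then it does not decrease the volume of `K ∩ C` either;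
in fact it gains the part of `C \ K` reflected into `K \ C` (`measure_inter_add_le_polar`).

Suppose a closed set `X` of diameter at most `D` has larger volume than `C = B(z, D / 2)`. The
space of compact subsets of the sphere is compact in the Vietoris topology, and volume is upper
semicontinuous on it. Hence among the compact sets of diameter at most `D` and volume at least that
of `X` there is one, `K`, with the largest volume of `K ∩ C`. The set `K \ C` has positive volume.

* If `C \ K` has positive volume, choose density points `x` of `K \ C` and `y` of `C \ K`. The
  reflection exchanging `x` and `y` maps part of `K \ C` of positive volume into `C \ K`
  (`exists_sphRefl_inter_pos`), and `z` lies on the side of `y`, so the polarization of `K`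
  contradicts maximality.
* If `C \ K` is null, then `K` contains the open ball and a point `x` outside `C`. Some point of the
  open ball lies on the far side of `z` at distance greater than `D` from `x` (`exists_inner_lt`),
  contradicting the diameter bound.

About the surface measure, only its invariance under isometries is used. As the sphere is compact
and homogeneous, invariance makes the measure finite (unless all balls have infinite volume),
positive on nonempty open sets (unless it is zero) and doubling, which is what Lebesgue's density
theorem requires. All distance bounds are expressed through inner products, using
`cos D = 2 * cos (D / 2) ^ 2 - 1`.
-/

open MeasureTheory

noncomputable section

/-- Euclidean space `ℝ^{n+1}`. -/
abbrev Esp (n : ℕ) : Type := EuclideanSpace ℝ (Fin (n + 1))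

/-- The unit sphere `S^n ⊆ ℝ^{n+1}`, as a subtype. -/
abbrev Sph (n : ℕ) : Type := Metric.sphere (0 : Esp n) 1

/-- Geodesic distance `d(x,y) = arccos ⟨x,y⟩` on the sphere. -/
def gd {n : ℕ} (x y : Sph n) : ℝ :=
  Real.arccos (inner (𝕜 := ℝ) (x : Esp n) (y : Esp n))

/-- Closed geodesic ball `B(z,r) = {x ∈ Sⁿ : d(x,z) ≤ r}`. -/
def sphBall {n : ℕ} (z : Sph n) (r : ℝ) : Set (Sph n) := {x | gd x z ≤ r}

/-- Geodesic diameter `diam X = sup {d(x,y) : x, y ∈ X}`. -/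
def sphDiam {n : ℕ} (X : Set (Sph n)) : ℝ :=
  sSup {r | ∃ x ∈ X, ∃ y ∈ X, r = gd x y}

/-- Spherical volume: the `n`-dimensional (Hausdorff) surface measure on `S^n`. -/
def sphVol (n : ℕ) : Measure (Sph n) := μH[(n : ℝ)]

/-! ### Reflections of the sphere -/

/-- The reflection of the sphere in the hyperplane orthogonal to `w`. -/
def sphRefl {n : ℕ} (w : Esp n) : Sph n ≃ᵢ Sph n where
  toFun p := ⟨(ℝ ∙ w)ᗮ.reflection p, by simp⟩
  invFun p := ⟨(ℝ ∙ w)ᗮ.reflection p, by simp⟩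
  left_inv p := by ext1; simp
  right_inv p := by ext1; simp
  isometry_toFun := Isometry.of_dist_eq fun p q => by
    simp [Subtype.dist_eq]

lemma coe_sphRefl {n : ℕ} (w : Esp n) (p : Sph n) :
    (sphRefl w p : Esp n) = (ℝ ∙ w)ᗮ.reflection (p : Esp n) := rfl

@[simp]
lemma sphRefl_sphRefl {n : ℕ} (w : Esp n) (p : Sph n) : sphRefl w (sphRefl w p) = p :=
  (sphRefl w).left_inv p

lemma inner_sphRefl_left {n : ℕ} (w : Esp n) (p : Sph n) :
    inner ℝ (sphRefl w p : Esp n) w = - inner ℝ (p : Esp n) w := by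
  rw [coe_sphRefl, ← LinearIsometryEquiv.inner_map_map (ℝ ∙ w)ᗮ.reflection,
    Submodule.reflection_reflection,
    Submodule.reflection_orthogonalComplement_singleton_eq_neg, inner_neg_right]

lemma inner_sphRefl_le {n : ℕ} {w : Esp n} {p q : Sph n}
    (hp : 0 ≤ inner ℝ (p : Esp n) w) (hq : 0 ≤ inner ℝ (q : Esp n) w) :
    inner ℝ (sphRefl w p : Esp n) (q : Esp n) ≤ inner ℝ (p : Esp n) (q : Esp n) := by
  rw [coe_sphRefl, Submodule.reflection_orthogonal_apply, Submodule.reflection_singleton_apply]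
  rw [neg_sub, inner_sub_left, two_smul, inner_add_left, real_inner_smul_left,
    real_inner_comm _ w, real_inner_comm _ w]
  have : 0 ≤ inner ℝ (p : Esp n) w / ((‖w‖ : ℝ) ^ 2) * inner ℝ (q : Esp n) w := by positivity
  simp only [RCLike.ofReal_real_eq_id, id]
  linarith

lemma sphRefl_sub {n : ℕ} (x y : Sph n) : sphRefl ((x : Esp n) - (y : Esp n)) x = y := by
  ext1
  rw [coe_sphRefl, Submodule.reflection_sub (by simp)]

lemma exists_isometry_map {n : ℕ} (x y : Sph n) : ∃ e : Sph n ≃ᵢ Sph n, e x = y :=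
  ⟨_, sphRefl_sub x y⟩

/-! ### Two-point symmetrization -/

/-- The two-point symmetrization (polarization) of `K` towards the half-space
`{p | 0 ≤ ⟪p, w⟫}`: of each pair of mirror images of which exactly one belongs to `K`, the
polarization keeps the one in the half-space. -/
def polar {n : ℕ} (w : Esp n) (K : Set (Sph n)) : Set (Sph n) :=
  (K ∩ sphRefl w ⁻¹' K) ∪ ((K ∪ sphRefl w ⁻¹' K) ∩ {p | 0 ≤ inner ℝ (p : Esp n) w})

lemma isClosed_polar {n : ℕ} (w : Esp n) {K : Set (Sph n)} (hK : IsClosed K) :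
    IsClosed (polar w K) := by
  have h := hK.preimage (sphRefl w).continuous
  refine (hK.inter h).union ((hK.union h).inter ?_)
  exact isClosed_le continuous_const (by fun_prop)

/-- Polarization preserves an upper bound on the diameter, expressed by inner products. -/
lemma le_inner_of_mem_polar {n : ℕ} {w : Esp n} {K : Set (Sph n)} {c : ℝ}
    (hK : ∀ x ∈ K, ∀ y ∈ K, c ≤ inner ℝ (x : Esp n) (y : Esp n)) :
    ∀ x ∈ polar w K, ∀ y ∈ polar w K, c ≤ inner ℝ (x : Esp n) (y : Esp n) := by
  have hτ : ∀ x y : Sph n, sphRefl w x ∈ K → sphRefl w y ∈ K →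
      c ≤ inner ℝ (x : Esp n) (y : Esp n) := by
    intro x y hx hy
    have := hK _ hx _ hy
    rwa [coe_sphRefl, coe_sphRefl, LinearIsometryEquiv.inner_map_map] at this
  rintro x (⟨hx, hx'⟩ | ⟨hx | hx, hxw⟩) y (⟨hy, hy'⟩ | ⟨hy | hy, hyw⟩)
  · exact hK _ hx _ hy
  · exact hK _ hx _ hy
  · exact hτ _ _ hx' hy
  · exact hK _ hx _ hy
  · exact hK _ hx _ hy
  · have h := hK _ hy _ hx
    have := inner_sphRefl_le hyw hxw
    rw [real_inner_comm]
    linarith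
  · exact hτ _ _ hx hy'
  · have h := hK _ hx _ hy
    have := inner_sphRefl_le hxw hyw
    linarith
  · exact hτ _ _ hx hy

lemma measurePreserving_sphRefl {n : ℕ} (w : Esp n) :
    MeasurePreserving (sphRefl w) (sphVol n) (sphVol n) :=
  (sphRefl w).measurePreserving_hausdorffMeasure _

/-- If `C` is stable under moving points into the half-space, polarization does not decrease the
measure of `K ∩ C`; moreover it gains the part of `C \ K` whose mirror image lies in `K \ C`. -/
lemma measure_inter_add_le_polar {n : ℕ} (w : Esp n) {K C : Set (Sph n)}
    (hK : IsClosed K) (hC : MeasurableSet C)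
    (hCw : ∀ x ∈ C, inner ℝ (x : Esp n) w < 0 → sphRefl w x ∈ C) :
    sphVol n (K ∩ C) + sphVol n (sphRefl w ⁻¹' (K \ C) ∩ (C \ K)) ≤
      sphVol n (polar w K ∩ C) := by
  have hP := (isClosed_polar w hK).measurableSet
  have hKm := hK.measurableSet
  have hm := (measurePreserving_sphRefl w).measurable
  set L := (K ∩ C) \ polar w K with hL
  have hLm : MeasurableSet L := (hKm.inter hC).diff hP
  set G := sphRefl w ⁻¹' (K \ C) ∩ (C \ K) with hG
  have hGm : MeasurableSet G := (hm (hKm.diff hC)).inter (hC.diff hKm)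
  have hLτ : sphVol n (sphRefl w ⁻¹' L) = sphVol n L :=
    (measurePreserving_sphRefl w).measure_preimage hLm.nullMeasurableSet
  -- a lost point lies in the open negative half-space and its mirror image is not in `K`
  have hLost : ∀ x ∈ L, inner ℝ (x : Esp n) w < 0 ∧ sphRefl w x ∉ K := by
    rintro x ⟨⟨hx, -⟩, hxP⟩
    constructor
    · by_contra! h
      exact hxP (Or.inr ⟨Or.inl hx, h⟩)
    · intro h
      exact hxP (Or.inl ⟨hx, h⟩)
  rw [← measure_inter_add_sdiff (K ∩ C) hP, ← hL, ← hLτ, ← measure_union ?_ (hm hLm),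
    ← measure_union ?_ hGm]
  · apply measure_mono
    rintro x ((⟨⟨-, hx⟩, hxP⟩ | hx) | ⟨⟨hx, hxC'⟩, hxC, hxK⟩)
    · exact ⟨hxP, hx⟩
    · have h := hLost _ hx
      have hC' := hCw _ hx.1.2 h.1
      rw [inner_sphRefl_left] at h
      rw [sphRefl_sphRefl] at hC'
      exact ⟨Or.inr ⟨Or.inr hx.1.1, by simpa using h.1.le⟩, hC'⟩
    · refine ⟨Or.inr ⟨Or.inr hx, ?_⟩, hxC⟩
      by_contra h
      exact hxC' (hCw _ hxC (not_le.1 h))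
  · rw [Set.disjoint_left]
    rintro x (⟨⟨hx, -⟩, -⟩ | hx) ⟨⟨hxK, hxC'⟩, hxC, hxK'⟩
    · exact hxK' hx
    · exact hxC' hx.1.2
  · rw [Set.disjoint_left]
    rintro x ⟨⟨hx, -⟩, -⟩ hx'
    have := (hLost _ hx').2
    rw [sphRefl_sphRefl] at this
    exact this hx

/-! ### Homogeneity of the surface measure -/

lemma sphVol_closedBall_eq {n : ℕ} (x y : Sph n) (r : ℝ) :
    sphVol n (Metric.closedBall x r) = sphVol n (Metric.closedBall y r) := by
  obtain ⟨e, rfl⟩ := exists_isometry_map x y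
  rw [← e.image_closedBall]
  exact (e.hausdorffMeasure_image _ _).symm

/-- Finitely many congruent copies of a nonempty open set cover the sphere. -/
lemma exists_sphVol_univ_le {n : ℕ} {U : Set (Sph n)} (hU : IsOpen U) (hne : U.Nonempty) :
    ∃ N : ℕ, sphVol n Set.univ ≤ N * sphVol n U := by
  obtain ⟨u, hu⟩ := hne
  obtain ⟨t, ht⟩ := isCompact_univ.elim_finite_subcover
    (fun e : Sph n ≃ᵢ Sph n => e ⁻¹' U) (fun e => hU.preimage e.continuous) (by
      intro x _
      obtain ⟨e, he⟩ := exists_isometry_map x u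
      exact Set.mem_iUnion.2 ⟨e, by simpa [he] using hu⟩)
  refine ⟨t.card, ?_⟩
  calc sphVol n Set.univ ≤ sphVol n (⋃ e ∈ t, e ⁻¹' U) := measure_mono ht
    _ ≤ ∑ e ∈ t, sphVol n (e ⁻¹' U) := measure_biUnion_finset_le _ _
    _ = ∑ e ∈ t, sphVol n U :=
      Finset.sum_congr rfl fun e _ => e.hausdorffMeasure_preimage _ _
    _ = t.card * sphVol n U := by simp

/-- The constant comes from covering the ball of radius `2` in the ambient Euclidean space by
finitely many balls of radius `1 / 2`, and scaling. -/
lemma doubling_sphVol (n : ℕ) : IsUnifLocDoublingMeasure (sphVol n) := by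
  obtain ⟨t, -, htf, ht⟩ := Metric.totallyBounded_iff.1
    (isCompact_closedBall (0 : Esp n) 2).totallyBounded (1 / 2) (by norm_num) |>.imp
      fun t h => (⟨trivial, h⟩ : True ∧ _)
  refine ⟨⟨htf.toFinset.card, ?_⟩⟩
  filter_upwards [self_mem_nhdsWithin] with ε (hε : 0 < ε) x
  have hcov : Metric.closedBall x (2 * ε) ⊆
      ⋃ v ∈ htf.toFinset, {p : Sph n | ‖(p : Esp n) - (x + ε • v)‖ ≤ ε / 2} := by
    intro p hp
    have h1 : ε⁻¹ • ((p : Esp n) - x) ∈ Metric.closedBall (0 : Esp n) 2 := by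
      rw [mem_closedBall_zero_iff, norm_smul, norm_inv, Real.norm_of_nonneg hε.le,
        inv_mul_le_iff₀ hε, mul_comm, ← dist_eq_norm]
      exact hp
    obtain ⟨v, hv, hpv⟩ := Set.mem_iUnion₂.1 (ht h1)
    refine Set.mem_iUnion₂.2 ⟨v, by simpa using hv, ?_⟩
    rw [Metric.mem_ball, dist_eq_norm] at hpv
    have h2 : (p : Esp n) - (x + ε • v) = ε • (ε⁻¹ • ((p : Esp n) - x) - v) := by
      rw [smul_sub, smul_inv_smul₀ hε.ne']
      abel
    rw [Set.mem_ofPred_eq, h2, norm_smul, Real.norm_of_nonneg hε.le]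
    nlinarith
  calc sphVol n (Metric.closedBall x (2 * ε))
      ≤ ∑ v ∈ htf.toFinset, sphVol n {p : Sph n | ‖(p : Esp n) - (x + ε • v)‖ ≤ ε / 2} :=
        (measure_mono hcov).trans (measure_biUnion_finset_le _ _)
    _ ≤ ∑ v ∈ htf.toFinset, sphVol n (Metric.closedBall x ε) := by
        refine Finset.sum_le_sum fun v _ => ?_
        rcases Set.eq_empty_or_nonempty {p : Sph n | ‖(p : Esp n) - (x + ε • v)‖ ≤ ε / 2} with
          h | ⟨q, hq⟩
        · simp [h]
        · rw [sphVol_closedBall_eq x q]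
          refine measure_mono fun p hp => ?_
          rw [Metric.mem_closedBall, Subtype.dist_eq]
          rw [Set.mem_ofPred_eq, ← dist_eq_norm] at hp hq
          linarith [dist_triangle_right (p : Esp n) q (x + ε • v)]
    _ = _ := by simp

/-- Two sets of positive measure contain points `x ∈ A`, `y ∈ B` such that the reflection
exchanging `x` and `y` maps a part of `A` of positive measure into `B`: take density points. -/
lemma exists_sphRefl_inter_pos {n : ℕ} [IsFiniteMeasure (sphVol n)]
    [(sphVol n).IsOpenPosMeasure] {A B : Set (Sph n)}
    (hA : MeasurableSet A) (hB : MeasurableSet B)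
    (hA0 : sphVol n A ≠ 0) (hB0 : sphVol n B ≠ 0) :
    ∃ x ∈ A, ∃ y ∈ B, sphVol n (sphRefl ((y : Esp n) - (x : Esp n)) ⁻¹' A ∩ B) ≠ 0 := by
  have := doubling_sphVol n
  have key : ∀ S : Set (Sph n), MeasurableSet S → sphVol n S ≠ 0 → ∃ x ∈ S,
      ∀ᶠ r in nhdsWithin (0 : ℝ) (Set.Ioi 0),
        2⁻¹ < sphVol n (S ∩ Metric.closedBall x r) / sphVol n (Metric.closedBall x r) := by
    intro S hS hS0
    have h1 : ∀ᵐ x ∂(sphVol n).restrict S, Filter.Tendsto (fun r =>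
        sphVol n (S ∩ Metric.closedBall x r) / sphVol n (Metric.closedBall x r))
        (nhdsWithin (0 : ℝ) (Set.Ioi 0)) (nhds 1) := by
      filter_upwards [IsUnifLocDoublingMeasure.ae_tendsto_measure_inter_div (sphVol n) S 1]
        with x hx
      refine hx (fun _ => x) id Filter.tendsto_id ?_
      filter_upwards [self_mem_nhdsWithin] with r (hr : 0 < r)
      simpa using hr.le
    have : (ae ((sphVol n).restrict S)).NeBot := by
      rw [ae_neBot, Ne, Measure.restrict_eq_zero]
      exact hS0
    obtain ⟨x, hx, hxS⟩ := (h1.and (ae_restrict_mem hS)).exists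
    exact ⟨x, hxS, hx.eventually (lt_mem_nhds (by norm_num))⟩
  obtain ⟨x, hx, hxr⟩ := key A hA hA0
  obtain ⟨y, hy, hyr⟩ := key B hB hB0
  refine ⟨x, hx, y, hy, fun h0 => ?_⟩
  obtain ⟨r, ⟨hr1, hr2⟩, hr⟩ := ((hxr.and hyr).and self_mem_nhdsWithin).exists
  set τ := sphRefl ((y : Esp n) - (x : Esp n)) with hτ
  have hτy : τ y = x := sphRefl_sub y x
  set b := sphVol n (Metric.closedBall y r) with hb
  have hb0 : b ≠ 0 := (Metric.measure_closedBall_pos _ _ hr).ne'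
  have hbt : b ≠ ⊤ := measure_ne_top _ _
  rw [sphVol_closedBall_eq x y, ← hb, ENNReal.lt_div_iff_mul_lt (Or.inl hb0) (Or.inl hbt)] at hr1
  rw [ENNReal.lt_div_iff_mul_lt (Or.inl hb0) (Or.inl hbt)] at hr2
  have hpre : τ ⁻¹' (A ∩ Metric.closedBall x r) = τ ⁻¹' A ∩ Metric.closedBall y r := by
    rw [Set.preimage_inter, ← hτy, τ.isometry.preimage_closedBall]
  have hmp := measurePreserving_sphRefl ((y : Esp n) - (x : Esp n))
  rw [← hmp.measure_preimage (hA.inter Metric.isClosed_closedBall.measurableSet).nullMeasurableSet,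
    ← hτ, hpre] at hr1
  have hle : sphVol n (τ ⁻¹' A ∩ Metric.closedBall y r) +
      sphVol n (B ∩ Metric.closedBall y r) ≤ b := by
    rw [← measure_union_add_inter _ (hB.inter Metric.isClosed_closedBall.measurableSet)]
    have hnull : sphVol n (τ ⁻¹' A ∩ Metric.closedBall y r ∩ (B ∩ Metric.closedBall y r)) = 0 :=
      measure_mono_null
        (Set.inter_subset_inter Set.inter_subset_left Set.inter_subset_left) h0
    rw [hnull, add_zero]
    exact measure_mono (Set.union_subset Set.inter_subset_right Set.inter_subset_right)
  have := (ENNReal.add_lt_add hr1 hr2).trans_le hle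
  rw [← add_mul, ENNReal.inv_two_add_inv_two, one_mul] at this
  exact lt_irrefl _ this

/-! ### The extremal problem -/

/-- A finite measure is upper semicontinuous on the space of compact sets. -/
lemma upperSemicontinuous_measure_compacts {n : ℕ} (μ : Measure (Sph n)) [IsFiniteMeasure μ] :
    UpperSemicontinuous fun K : TopologicalSpace.Compacts (Sph n) => μ (K : Set (Sph n)) := by
  intro K c hc
  obtain ⟨U, hKU, hU, hUc⟩ := (K : Set (Sph n)).exists_isOpen_lt_of_lt c hc
  filter_upwards [(TopologicalSpace.Compacts.isOpen_subsets_of_isOpen hU).mem_nhds hKU] with L hL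
  exact (measure_mono hL).trans_lt hUc

lemma isClosed_setOf_le_inner (n : ℕ) (c : ℝ) :
    IsClosed {K : TopologicalSpace.Compacts (Sph n) |
      ∀ x ∈ K, ∀ y ∈ K, c ≤ inner ℝ (x : Esp n) (y : Esp n)} := by
  have hF : IsClosed {p : Sph n × Sph n | c ≤ inner ℝ (p.1 : Esp n) (p.2 : Esp n)} :=
    isClosed_le continuous_const (by fun_prop)
  have h := (TopologicalSpace.Compacts.isClosed_subsets_of_isClosed hF).preimage
    (TopologicalSpace.Compacts.continuous_prod.comp
      (continuous_id.prodMk continuous_id : Continuous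
        fun K : TopologicalSpace.Compacts (Sph n) => (K, K)))
  convert h using 1
  ext K
  constructor
  · rintro hK ⟨x, y⟩ ⟨hx, hy⟩
    exact hK x hx y hy
  · intro hK x hx y hy
    exact hK (show (x, y) ∈ _ from ⟨hx, hy⟩)

/-- A point `x` outside the cap `{y | k ≤ ⟪y, z⟫}` has a point of the open cap at distance
greater than the diameter of the cap; with `k = cos (D / 2)` one has `2 * k ^ 2 - 1 = cos D`. -/
lemma exists_inner_lt {n : ℕ} {k : ℝ} (hk0 : 0 < k) (hk1 : k < 1) (z x : Sph n)
    (hx : inner ℝ (x : Esp n) (z : Esp n) < k) :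
    ∃ y : Sph n, k < inner ℝ (y : Esp n) (z : Esp n) ∧
      inner ℝ (x : Esp n) (y : Esp n) < 2 * k ^ 2 - 1 := by
  set a := inner ℝ (x : Esp n) (z : Esp n) with ha
  have hxx : inner ℝ (x : Esp n) (x : Esp n) = 1 := by simp
  have hzz : inner ℝ (z : Esp n) (z : Esp n) = 1 := by simp
  rcases lt_or_ge a (-k) with hak | hak
  · refine ⟨-x, ?_, ?_⟩
    · rw [show ((-x : Sph n) : Esp n) = -(x : Esp n) from rfl, inner_neg_left]
      linarith
    · rw [show ((-x : Sph n) : Esp n) = -(x : Esp n) from rfl, inner_neg_right, hxx]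
      nlinarith
  · have hs2 : 0 < 1 - a ^ 2 := by nlinarith
    set s := √(1 - a ^ 2) with hs
    have hs0 : 0 < s := Real.sqrt_pos.2 hs2
    have hss : s ^ 2 = 1 - a ^ 2 := Real.sq_sqrt hs2.le
    -- the point at angle `arccos m` from `z`, on the great circle through `x`, opposite to `x`
    have hpt : ∀ m : ℝ, 0 < m → m < 1 → ∃ y : Sph n, inner ℝ (y : Esp n) (z : Esp n) = m ∧
        inner ℝ (x : Esp n) (y : Esp n) = m * a - √(1 - m ^ 2) * s := by
      intro m hm0 hm1
      have ht : √(1 - m ^ 2) ^ 2 = 1 - m ^ 2 := Real.sq_sqrt (by nlinarith)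
      set t := √(1 - m ^ 2)
      set v : Esp n := m • (z : Esp n) - (t / s) • ((x : Esp n) - a • (z : Esp n)) with hv
      have hvz : inner ℝ v (z : Esp n) = m := by
        rw [hv]
        simp only [inner_sub_left, real_inner_smul_left, hzz, ← ha]
        ring
      have hxv : inner ℝ (x : Esp n) v = m * a - t * s := by
        rw [hv]
        simp only [inner_sub_right, real_inner_smul_right, hxx, ← ha]
        rw [show 1 - a * a = s ^ 2 by rw [hss]; ring]
        field_simp
      have hvv : inner ℝ v v = 1 := by
        have h : ∀ u : Esp n, inner ℝ v u = m * inner ℝ (z : Esp n) u -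
            t / s * (inner ℝ (x : Esp n) u - a * inner ℝ (z : Esp n) u) := by
          intro u
          rw [hv]
          simp only [inner_sub_left, real_inner_smul_left]
        rw [h v, hxv, real_inner_comm v (z : Esp n), hvz]
        field_simp
        linear_combination s * ht
      refine ⟨⟨v, ?_⟩, hvz, hxv⟩
      rw [mem_sphere_zero_iff_norm]
      rw [real_inner_self_eq_norm_sq] at hvv
      nlinarith [norm_nonneg v]
    have hlt : k * a - √(1 - k ^ 2) * s < 2 * k ^ 2 - 1 := by
      have ht0 : 0 < 1 - k ^ 2 := by nlinarith
      have ht : √(1 - k ^ 2) ^ 2 = 1 - k ^ 2 := Real.sq_sqrt ht0.le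
      have hts : √(1 - k ^ 2) ≤ s := Real.sqrt_le_sqrt (by nlinarith)
      have := Real.sqrt_pos.2 ht0
      nlinarith
    have hcont : Continuous fun m : ℝ => m * a - √(1 - m ^ 2) * s := by fun_prop
    have hev : ∀ᶠ m in nhdsWithin k (Set.Ioi k), m * a - √(1 - m ^ 2) * s < 2 * k ^ 2 - 1 :=
      (hcont.tendsto k).mono_left nhdsWithin_le_nhds |>.eventually (gt_mem_nhds hlt)
    obtain ⟨m, ⟨hm, hm1⟩, hmk⟩ := ((hev.and (nhdsWithin_le_nhds (gt_mem_nhds hk1))).and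
      self_mem_nhdsWithin).exists
    have hmk : k < m := hmk
    obtain ⟨y, hy, hxy⟩ := hpt m (hk0.trans hmk) hm1
    exact ⟨y, hy ▸ hmk, hxy ▸ hm⟩

/-- The isodiametric inequality for closed sets, with distances expressed by inner products. -/
lemma sphVol_le_cap {n : ℕ} [IsFiniteMeasure (sphVol n)] [(sphVol n).IsOpenPosMeasure]
    {k : ℝ} (hk0 : 0 < k) (hk1 : k < 1) (z : Sph n) {X : Set (Sph n)} (hX : IsClosed X)
    (hXd : ∀ x ∈ X, ∀ y ∈ X, 2 * k ^ 2 - 1 ≤ inner ℝ (x : Esp n) (y : Esp n)) :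
    sphVol n X ≤ sphVol n {x | k ≤ inner ℝ (x : Esp n) (z : Esp n)} := by
  by_contra! hlt
  set C : Set (Sph n) := {x | k ≤ inner ℝ (x : Esp n) (z : Esp n)} with hCdef
  have hC : IsClosed C := isClosed_le continuous_const (by fun_prop)
  have hCm := hC.measurableSet
  -- `K` maximizes the volume of `K ∩ C` among the competitors at least as large as `X`
  obtain ⟨K, ⟨hKd, hKX⟩, hmax⟩ := UpperSemicontinuousOn.exists_isMaxOn
    (s := {K : TopologicalSpace.Compacts (Sph n) |
      ∀ x ∈ K, ∀ y ∈ K, 2 * k ^ 2 - 1 ≤ inner ℝ (x : Esp n) (y : Esp n)} ∩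
      (fun K : TopologicalSpace.Compacts (Sph n) => sphVol n (K : Set (Sph n))) ⁻¹'
        Set.Ici (sphVol n X))
    (f := fun K : TopologicalSpace.Compacts (Sph n) => (sphVol n).restrict C (K : Set (Sph n)))
    ⟨⟨X, hX.isCompact⟩, hXd, le_refl (sphVol n X)⟩
    ((isClosed_setOf_le_inner n _).inter
      ((upperSemicontinuous_measure_compacts _).isClosed_preimage _)).isCompact
    ((upperSemicontinuous_measure_compacts _).upperSemicontinuousOn _)
  have hKX : sphVol n X ≤ sphVol n (K : Set (Sph n)) := hKX
  have hKc : IsClosed (K : Set (Sph n)) := K.isCompact.isClosed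
  have hA0 : sphVol n ((K : Set (Sph n)) \ C) ≠ 0 := fun h0 =>
    (hlt.trans_le hKX).not_ge ((measure_le_inter_add_sdiff _ _ C).trans (by
      rw [h0, add_zero]
      exact measure_mono Set.inter_subset_right))
  by_cases hB0 : sphVol n (C \ (K : Set (Sph n))) = 0
  · -- `K` contains the open cap and a point outside the cap, so its diameter is too large
    obtain ⟨x, hxK, hxC⟩ := nonempty_of_measure_ne_zero hA0
    obtain ⟨y, hyz, hxy⟩ := exists_inner_lt hk0 hk1 z x (not_le.1 hxC)
    have hyK : y ∈ K := by
      by_contra hyK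
      have hopen : IsOpen ({p : Sph n | k < inner ℝ (p : Esp n) (z : Esp n)} \ K) :=
        (isOpen_lt continuous_const (by fun_prop)).sdiff hKc
      refine hopen.measure_ne_zero (sphVol n) ⟨y, hyz, hyK⟩ (measure_mono_null ?_ hB0)
      exact Set.sdiff_subset_sdiff_left fun p (hp : k < _) => hp.le
    exact (hKd x hxK y hyK).not_gt hxy
  · -- polarizing in the bisector of `x` and `y` strictly increases the volume inside `C`
    obtain ⟨x, hx, y, hy, hpos⟩ :=
      exists_sphRefl_inter_pos (hKc.measurableSet.diff hCm) (hCm.diff hKc.measurableSet) hA0 hB0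
    set w : Esp n := (y : Esp n) - (x : Esp n) with hw
    have hzw : 0 ≤ inner ℝ (z : Esp n) w := by
      have h1 : k ≤ inner ℝ (y : Esp n) (z : Esp n) := hy.1
      have h2 : inner ℝ (x : Esp n) (z : Esp n) < k := not_le.1 hx.2
      rw [hw, inner_sub_right, real_inner_comm, real_inner_comm (x : Esp n)]
      linarith
    have hCw : ∀ p ∈ C, inner ℝ (p : Esp n) w < 0 → sphRefl w p ∈ C := by
      intro p (hp : k ≤ inner ℝ (p : Esp n) (z : Esp n)) hpw
      have h1 : 0 ≤ inner ℝ (sphRefl w p : Esp n) w := by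
        rw [inner_sphRefl_left]
        linarith
      have h2 := inner_sphRefl_le h1 hzw
      rw [sphRefl_sphRefl] at h2
      exact hp.trans h2
    have hgain := measure_inter_add_le_polar w hKc hCm hCw
    have hvol := measure_inter_add_le_polar w hKc MeasurableSet.univ (fun _ _ _ => Set.mem_univ _)
    have hPc := isClosed_polar w hKc
    have hle := hmax (show (⟨polar w K, hPc.isCompact⟩ : TopologicalSpace.Compacts (Sph n)) ∈ _ from
      ⟨le_inner_of_mem_polar hKd, by
        simp only [Set.inter_univ, Set.sdiff_univ, Set.preimage_empty, Set.empty_inter,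
          measure_empty, add_zero] at hvol
        exact hKX.trans hvol⟩)
    have hle : (sphVol n).restrict C (polar w K) ≤ (sphVol n).restrict C (K : Set (Sph n)) := hle
    rw [Measure.restrict_apply hPc.measurableSet, Measure.restrict_apply hKc.measurableSet] at hle
    exact (ENNReal.lt_add_right (measure_ne_top _ _) hpos).not_ge (hgain.trans hle)

/-- spherical isodiametric inequality. -/
theorem spherical_isodiametric (n : ℕ) (hn : 2 ≤ n) (D : ℝ) (hD0 : 0 < D)
    (hD1 : D < Real.pi) (z : Sph n) (X : Set (Sph n)) (hX : MeasurableSet X)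
    (hdiam : sphDiam X ≤ D) :
    sphVol n X ≤ sphVol n (sphBall z (D / 2)) := by
  have hk0 : 0 < Real.cos (D / 2) := Real.cos_pos_of_mem_Ioo ⟨by linarith, by linarith⟩
  have hk1 : Real.cos (D / 2) < 1 := by
    rw [← Real.cos_zero]
    exact Real.cos_lt_cos_of_nonneg_of_le_pi le_rfl (by linarith) (by linarith)
  have hgd : ∀ (x y : Sph n) (r : ℝ), 0 ≤ r → r ≤ Real.pi →
      (gd x y ≤ r ↔ Real.cos r ≤ inner ℝ (x : Esp n) (y : Esp n)) := by
    intro x y r hr0 hr1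
    have habs := abs_real_inner_le_norm (x : Esp n) (y : Esp n)
    rw [norm_eq_of_mem_sphere x, norm_eq_of_mem_sphere y, one_mul, abs_le] at habs
    rw [gd, ← Real.strictAntiOn_cos.le_iff_ge ⟨hr0, hr1⟩
      ⟨Real.arccos_nonneg _, Real.arccos_le_pi _⟩, Real.cos_arccos habs.1 habs.2]
  have hball : sphBall z (D / 2) =
      {x : Sph n | Real.cos (D / 2) ≤ inner ℝ (x : Esp n) (z : Esp n)} := by
    ext x
    exact hgd x z _ (by linarith) (by linarith)
  have hXd : ∀ x ∈ X, ∀ y ∈ X,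
      2 * Real.cos (D / 2) ^ 2 - 1 ≤ inner ℝ (x : Esp n) (y : Esp n) := by
    intro x hx y hy
    rw [← Real.cos_two_mul, mul_div_cancel₀ D two_ne_zero]
    have hbdd : BddAbove {r | ∃ x ∈ X, ∃ y ∈ X, r = gd x y} := by
      refine ⟨Real.pi, ?_⟩
      rintro _ ⟨p, -, q, -, rfl⟩
      exact Real.arccos_le_pi _
    exact (hgd x y D hD0.le hD1.le).1 ((le_csSup hbdd ⟨x, hx, y, hy, rfl⟩).trans hdiam)
  -- passing to the closure keeps the bound on the diameter
  have hcl : ∀ x ∈ closure X, ∀ y ∈ closure X,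
      2 * Real.cos (D / 2) ^ 2 - 1 ≤ inner ℝ (x : Esp n) (y : Esp n) := by
    have hF : IsClosed {p : Sph n × Sph n |
        2 * Real.cos (D / 2) ^ 2 - 1 ≤ inner ℝ (p.1 : Esp n) (p.2 : Esp n)} :=
      isClosed_le continuous_const (by fun_prop)
    have hsub : closure (X ×ˢ X) ⊆ _ :=
      closure_minimal (fun p hp => hXd p.1 hp.1 p.2 hp.2) hF
    rw [closure_prod_eq] at hsub
    exact fun x hx y hy => hsub (Set.mk_mem_prod hx hy)
  have hsubset : {x : Sph n | Real.cos (D / 2) < inner ℝ (x : Esp n) (z : Esp n)} ⊆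
      sphBall z (D / 2) := by
    rw [hball]
    exact fun x (hx : Real.cos (D / 2) < _) => hx.le
  -- if the ball has infinite volume there is nothing to prove; otherwise the total volume is finite
  by_cases htop : sphVol n (sphBall z (D / 2)) = ⊤
  · rw [htop]
    exact le_top
  obtain ⟨N, hN⟩ := exists_sphVol_univ_le
    (U := {x : Sph n | Real.cos (D / 2) < inner ℝ (x : Esp n) (z : Esp n)})
    (isOpen_lt continuous_const (by fun_prop)) ⟨z, by simpa using hk1⟩
  have hfin : IsFiniteMeasure (sphVol n) := by
    refine ⟨hN.trans_lt (ENNReal.mul_lt_top (by simp) ?_)⟩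
    exact (measure_mono hsubset).trans_lt (lt_top_iff_ne_top.2 htop)
  -- likewise the case of zero total volume is trivial
  by_cases hzero : sphVol n Set.univ = 0
  · rw [measure_mono_null (Set.subset_univ X) hzero]
    exact zero_le
  have hpos : (sphVol n).IsOpenPosMeasure := by
    refine ⟨fun U hU hne h0 => hzero ?_⟩
    obtain ⟨M, hM⟩ := exists_sphVol_univ_le hU hne
    simpa [h0] using hM
  rw [hball]
  exact (measure_mono subset_closure).trans (sphVol_le_cap hk0 hk1 z isClosed_closure hcl)
end
end

section
/- Let n ≥ 2 and 0 < D < π, and let z ∈ S^n. If X ⊆ S^n is a Borel measurable set with geodesic diameter diam X ≤ D and σ(X) = σ(B(z, D/2)), then there exists w ∈ S^n such that the closure of X in S^n equals the closed geodesic ball B(w, D/2). -/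
/-!
The proof combines two-point symmetrization (polarization) with the parallel set at a small
distance.

*The inequality.* Polarizing two closed sets `A`, `B` with respect to the same hyperplane keeps
their volumes and does not increase the largest distance between them. Maximizing a weight that
increases towards a point `e`, over a compact family of pairs of closed sets
(`exists_polarized`), yields a pair on which all polarizations towards `e` act trivially up to null
sets; such sets are, up to null sets, balls around `e` (`exists_ball_of_moved_null`). Hence if all
distances between `A` and `B` are at most `D < π` and `A` has at least the volume of a ball of
radius `r`, then `B` has at most the volume of a ball of radius `D - r` (`pair_isodiametric`). With
`A = B` this is the isodiametric inequality. With `B` the antipodal image of the complement of the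
parallel set of `A` it is a lower bound for the volume of a parallel set (`ball_le_parallel`).

*The equality case.* Let `K` be the closure of `X`. For suitable small `s`, the parallel set `L` of
`K` at distance `s` has diameter at most `D + 2s` and at least the volume of a ball of radius
`D/2 + s`, so it is extremal too. In `L`, a point has at most one partner at the maximal distance
(`partner_unique`). In an extremal set every boundary point `p` has a partner `q`. Polarization
keeps the set extremal, and this forces the reflection exchanging two boundary points to map the
partner of the first to the partner of the second (`IsExtremal.mirror_partner_mem`). A short
computation shows that the partner of any further boundary point `y` is `p + q - y`. So the boundary
of `L` lies on a sphere of radius `D/2 + s` around some `w`, and `L` is contained in the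
corresponding ball (`IsExtremal.subset_ball`). Consequently `K` lies in the ball of radius `D/2`
around `w`, and being closed of full volume it is equal to this ball.
-/

open MeasureTheory

noncomputable section

open Set Filter Topology

/-! ### Inner products, geodesics and reflections on the sphere -/

/-- The inner product of two points of the sphere, i.e. the cosine of their distance. -/
abbrev ip {n : ℕ} (x y : Sph n) : ℝ := inner ℝ (x : Esp n) (y : Esp n)

section Basics
variable {n : ℕ}

lemma sph_norm (x : Sph n) : ‖(x : Esp n)‖ = 1 := by simp

lemma ip_self (x : Sph n) : ip x x = 1 := by simp [ip]

lemma ip_comm (x y : Sph n) : ip x y = ip y x := real_inner_comm _ _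

lemma ip_le_one (x y : Sph n) : ip x y ≤ 1 := by
  have := real_inner_le_norm (x : Esp n) y
  simpa [sph_norm] using this

lemma neg_one_le_ip (x y : Sph n) : -1 ≤ ip x y := by
  have := abs_real_inner_le_norm (x : Esp n) y
  simp only [sph_norm, mul_one] at this
  exact (abs_le.mp this).1

lemma continuous_ip : Continuous fun p : Sph n × Sph n => ip p.1 p.2 := by
  unfold ip; fun_prop

lemma continuous_ip_right (w : Sph n) : Continuous fun x : Sph n => ip x w := by
  unfold ip; fun_prop

lemma ip_neg_left (x y : Sph n) : ip (-x) y = -ip x y := by simp [ip]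

lemma ip_neg_right (x y : Sph n) : ip x (-y) = -ip x y := by simp [ip]

lemma dist_sq_eq (x y : Sph n) : dist x y ^ 2 = 2 - 2 * ip x y := by
  rw [Subtype.dist_eq, dist_eq_norm, norm_sub_sq_real, sph_norm, sph_norm]; ring

lemma eq_of_ip_eq_one {x y : Sph n} (h : ip x y = 1) : x = y := by
  have := dist_sq_eq x y
  rw [h] at this
  exact dist_eq_zero.mp (by nlinarith [dist_nonneg (x := x) (y := y)])

lemma ip_lt_one {x y : Sph n} (h : x ≠ y) : ip x y < 1 :=
  lt_of_le_of_ne (ip_le_one x y) fun h' => h (eq_of_ip_eq_one h')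

lemma ip_sub_le_dist (x y q : Sph n) : ip x q - ip y q ≤ dist x y := by
  have := real_inner_le_norm ((x : Esp n) - y) q
  rw [inner_sub_left, sph_norm, mul_one] at this
  rwa [Subtype.dist_eq, dist_eq_norm]

lemma gd_nonneg (x y : Sph n) : 0 ≤ gd x y := Real.arccos_nonneg _

lemma gd_le_pi (x y : Sph n) : gd x y ≤ Real.pi := Real.arccos_le_pi _

lemma cos_gd (x y : Sph n) : Real.cos (gd x y) = ip x y :=
  Real.cos_arccos (neg_one_le_ip x y) (ip_le_one x y)

lemma gd_comm (x y : Sph n) : gd x y = gd y x := by simp [gd, real_inner_comm]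

lemma gd_le_iff {x y : Sph n} {r : ℝ} (h0 : 0 ≤ r) (h1 : r ≤ Real.pi) :
    gd x y ≤ r ↔ Real.cos r ≤ ip x y := by
  rw [← cos_gd]
  exact (Real.strictAntiOn_cos.le_iff_ge ⟨h0, h1⟩ ⟨gd_nonneg x y, gd_le_pi x y⟩).symm

lemma gd_lt_iff {x y : Sph n} {r : ℝ} (h0 : 0 ≤ r) (h1 : r ≤ Real.pi) :
    gd x y < r ↔ Real.cos r < ip x y := by
  rw [← cos_gd]
  exact (Real.strictAntiOn_cos.lt_iff_gt ⟨h0, h1⟩ ⟨gd_nonneg x y, gd_le_pi x y⟩).symm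

lemma gd_triangle (x y z : Sph n) : gd x z ≤ gd x y + gd y z := by
  have h := InnerProductGeometry.angle_le_angle_add_angle (x : Esp n) y z
  simpa [InnerProductGeometry.angle, gd, sph_norm] using h

lemma gd_self (x : Sph n) : gd x x = 0 := by
  have h := ip_self x
  unfold ip at h
  rw [gd, h, Real.arccos_one]

lemma gd_neg_right (x y : Sph n) : gd x (-y) = Real.pi - gd x y := by
  simp [gd, Real.arccos_neg]

lemma mem_sphBall_iff {x z : Sph n} {r : ℝ} (h0 : 0 ≤ r) (h1 : r ≤ Real.pi) :
    x ∈ sphBall z r ↔ Real.cos r ≤ ip x z := gd_le_iff h0 h1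

/-- A unit vector orthogonal to `p` exists because the ambient dimension is at least two. -/
lemma exists_unit_orthogonal (hn : 1 ≤ n) (p : Esp n) :
    ∃ t : Esp n, ‖t‖ = 1 ∧ inner ℝ p t = 0 := by
  have hne : (ℝ ∙ p)ᗮ ≠ ⊥ := by
    intro h
    have h1 := Submodule.finrank_add_finrank_orthogonal (ℝ ∙ p)
    rw [h] at h1
    have h2 := finrank_span_le_card (R := ℝ) ({p} : Set (Esp n))
    simp at h1 h2
    omega
  obtain ⟨v, hv, hv0⟩ := Submodule.exists_mem_ne_zero_of_ne_bot hne
  refine ⟨(‖v‖⁻¹ : ℝ) • v, ?_, ?_⟩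
  · rw [norm_smul, norm_inv, norm_norm, inv_mul_cancel₀ (norm_ne_zero_iff.mpr hv0)]
  · rw [inner_smul_right, Submodule.mem_orthogonal_singleton_iff_inner_right.mp hv, mul_zero]

/-- The initial direction of a minimizing geodesic from `p` to `q`. -/
lemma exists_direction (hn : 1 ≤ n) (p q : Sph n) :
    ∃ t : Esp n, ‖t‖ = 1 ∧ inner ℝ (p : Esp n) t = 0 ∧
      (q : Esp n) = Real.cos (gd p q) • (p : Esp n) + Real.sin (gd p q) • t := by
  set v : Esp n := (q : Esp n) - ip p q • (p : Esp n) with hv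
  have hpp : inner ℝ (p : Esp n) p = (1 : ℝ) := ip_self p
  have hqq : inner ℝ (q : Esp n) q = (1 : ℝ) := ip_self q
  have hqp : inner ℝ (q : Esp n) p = ip p q := real_inner_comm _ _
  have hpv : inner ℝ (p : Esp n) v = 0 := by
    rw [hv, inner_sub_right, inner_smul_right, hpp]; simp
  have hvv : ‖v‖ ^ 2 = 1 - ip p q ^ 2 := by
    rw [← real_inner_self_eq_norm_sq, hv, inner_sub_left, inner_sub_right, inner_sub_right,
      inner_smul_left, inner_smul_right, inner_smul_left, inner_smul_right, hpp, hqq, hqp]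
    simp; ring
  have hs : Real.sin (gd p q) = ‖v‖ := by
    rw [gd, Real.sin_arccos]
    exact (Real.sqrt_eq_iff_eq_sq (by
      have := hvv ▸ sq_nonneg ‖v‖; exact this) (norm_nonneg v)).mpr hvv.symm
  by_cases hv0 : v = 0
  · obtain ⟨t, ht, ht'⟩ := exists_unit_orthogonal hn (p : Esp n)
    refine ⟨t, ht, ht', ?_⟩
    rw [hs, hv0, norm_zero, zero_smul, add_zero, cos_gd]
    exact sub_eq_zero.mp hv0
  · refine ⟨(‖v‖⁻¹ : ℝ) • v, ?_, ?_, ?_⟩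
    · rw [norm_smul, norm_inv, norm_norm, inv_mul_cancel₀ (norm_ne_zero_iff.mpr hv0)]
    · rw [inner_smul_right, hpv, mul_zero]
    · rw [hs, smul_smul, mul_inv_cancel₀ (norm_ne_zero_iff.mpr hv0), one_smul, cos_gd, hv]
      abel

/-- The great circle through `p` and `q`, parametrized by arc length. -/
lemma exists_geodesic (hn : 1 ≤ n) (p q : Sph n) :
    ∃ g : ℝ → Sph n, g 0 = p ∧ g (gd p q) = q ∧ Continuous g ∧
      ∀ a b, ip (g a) (g b) = Real.cos (a - b) := by
  obtain ⟨t, ht, hpt, hq⟩ := exists_direction hn p q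
  have hpp : inner ℝ (p : Esp n) p = (1 : ℝ) := ip_self p
  have htt : inner ℝ t t = (1 : ℝ) := by rw [real_inner_self_eq_norm_sq, ht]; norm_num
  have htp : inner ℝ t (p : Esp n) = 0 := by rw [real_inner_comm]; exact hpt
  have key : ∀ a b : ℝ, inner ℝ (Real.cos a • (p : Esp n) + Real.sin a • t)
      (Real.cos b • (p : Esp n) + Real.sin b • t) = Real.cos (a - b) := by
    intro a b
    simp only [inner_add_left, inner_add_right, inner_smul_left, inner_smul_right, hpp, htt, htp,
      hpt, Real.cos_sub]
    simp
    ring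
  refine ⟨fun a => ⟨Real.cos a • (p : Esp n) + Real.sin a • t, ?_⟩, ?_, ?_, ?_, ?_⟩
  · have h := key a a
    rw [sub_self, Real.cos_zero, real_inner_self_eq_norm_sq] at h
    rw [mem_sphere_zero_iff_norm]
    nlinarith [norm_nonneg (Real.cos a • (p : Esp n) + Real.sin a • t)]
  · ext1; simp
  · ext1; exact hq.symm
  · apply Continuous.subtype_mk; fun_prop
  · intro a b; exact key a b

/-- Two points `q, q'` that lie equally far beyond `a ≠ x` as seen from `x`, in the equality case
of the triangle inequality, coincide. -/
lemma unique_of_triangle_eq (hn : 1 ≤ n) {x a q : Sph n} {s : ℝ} (hs : 0 < s) (hs1 : s < Real.pi)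
    (hxa : gd x a = s) {d : ℝ} (hxq : ip x q = Real.cos d) (haq : ip a q = Real.cos (d - s))
    {q' : Sph n} (hxq' : ip x q' = Real.cos d) (haq' : ip a q' = Real.cos (d - s)) : q = q' := by
  obtain ⟨t, ht, hxt, ha⟩ := exists_direction hn x a
  rw [hxa] at ha
  have hsin : 0 < Real.sin s := Real.sin_pos_of_pos_of_lt_pi hs hs1
  have hxx : inner ℝ (x : Esp n) x = (1 : ℝ) := ip_self x
  have htt : inner ℝ t t = (1 : ℝ) := by rw [real_inner_self_eq_norm_sq, ht]; norm_num
  have htx : inner ℝ t (x : Esp n) = 0 := by rw [real_inner_comm]; exact hxt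
  have key : ∀ r : Sph n, ip x r = Real.cos d → ip a r = Real.cos (d - s) →
      (r : Esp n) = Real.cos d • (x : Esp n) + Real.sin d • t := by
    intro r hxr har
    have htr : inner ℝ t (r : Esp n) = Real.sin d := by
      unfold ip at hxr har
      rw [ha, inner_add_left, inner_smul_left, inner_smul_left, hxr, Real.cos_sub] at har
      simp at har
      have : Real.sin s * (inner ℝ t (r : Esp n) - Real.sin d) = 0 := by linarith
      rcases mul_eq_zero.mp this with h | h
      · exact absurd h hsin.ne'
      · linarith
    have hrr : inner ℝ (r : Esp n) r = (1 : ℝ) := ip_self r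
    have h1 : ‖(r : Esp n) - (Real.cos d • (x : Esp n) + Real.sin d • t)‖ ^ 2 = 0 := by
      rw [norm_sub_sq_real, ← real_inner_self_eq_norm_sq, hrr, ← real_inner_self_eq_norm_sq]
      simp only [inner_add_left, inner_add_right, inner_smul_left, inner_smul_right, hxx, htt, htx,
        hxt, real_inner_comm _ (r : Esp n)]
      unfold ip at hxr
      simp only [real_inner_comm (r : Esp n)] at hxr htr ⊢
      rw [hxr, htr]
      simp
      nlinarith [Real.sin_sq_add_cos_sq d]
    exact sub_eq_zero.mp (norm_eq_zero.mp (pow_eq_zero_iff (two_ne_zero) |>.mp h1))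
  ext1
  rw [key q hxq haq, key q' hxq' haq']

/-- Reflection of the sphere in the hyperplane orthogonal to `u`. -/
def mirror (u : Esp n) : Sph n ≃ᵢ Sph n where
  toFun x := ⟨(ℝ ∙ u)ᗮ.reflection x, by simp⟩
  invFun x := ⟨(ℝ ∙ u)ᗮ.reflection x, by simp⟩
  left_inv x := by ext1; simp
  right_inv x := by ext1; simp
  isometry_toFun := by
    intro x y
    exact (ℝ ∙ u)ᗮ.reflection.isometry x y

lemma coe_mirror (u : Esp n) (x : Sph n) :
    (mirror u x : Esp n) = x - (2 * inner ℝ (x : Esp n) u / ‖u‖ ^ 2) • u := by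
  change (ℝ ∙ u)ᗮ.reflection (x : Esp n) = _
  rw [Submodule.reflection_orthogonal_apply, Submodule.reflection_singleton_apply]
  rw [real_inner_comm]
  simp only [RCLike.ofReal_real_eq_id, id, neg_sub, two_smul, ← add_smul, two_mul,
    add_div]

lemma mirror_mirror (u : Esp n) (x : Sph n) : mirror u (mirror u x) = x := by
  ext1; exact (ℝ ∙ u)ᗮ.reflection_reflection x

lemma ip_mirror_mirror (u : Esp n) (x y : Sph n) : ip (mirror u x) (mirror u y) = ip x y :=
  (ℝ ∙ u)ᗮ.reflection.inner_map_map x y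

lemma ip_mirror_left (u : Esp n) (x y : Sph n) : ip (mirror u x) y = ip x (mirror u y) := by
  rw [← ip_mirror_mirror u (mirror u x) y, mirror_mirror]

lemma mirror_sub (x y : Sph n) : mirror ((x : Esp n) - (y : Esp n)) x = y := by
  ext1; exact Submodule.reflection_sub (by simp)

lemma mirror_sub' (x y : Sph n) : mirror ((x : Esp n) - (y : Esp n)) y = x := by
  have h := congrArg (mirror ((x : Esp n) - (y : Esp n))) (mirror_sub x y)
  rw [mirror_mirror] at h
  exact h.symm

lemma ip_mirror_eq (u : Esp n) (x y : Sph n) :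
    ip x (mirror u y) = ip x y - 2 * inner ℝ (x : Esp n) u * inner ℝ (y : Esp n) u / ‖u‖ ^ 2 := by
  unfold ip
  rw [coe_mirror, inner_sub_right, inner_smul_right]; ring

lemma inner_mirror_self (u : Esp n) (x : Sph n) :
    inner ℝ (mirror u x : Esp n) u = -inner ℝ (x : Esp n) u := by
  rw [coe_mirror, inner_sub_left, inner_smul_left, real_inner_self_eq_norm_sq]
  by_cases h : u = 0
  · simp [h]
  · have : ‖u‖ ^ 2 ≠ 0 := by simpa using h
    simp only [conj_trivial]; field_simp; ring

lemma mirror_eq_self {u : Esp n} {x : Sph n} (h : inner ℝ (x : Esp n) u = 0) : mirror u x = x := by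
  ext1; rw [coe_mirror, h]; simp

end Basics

/-! ### The surface measure: invariance, finiteness, positivity on open sets -/

section Measure
variable {n : ℕ}

lemma measurePreserving_mirror (u : Esp n) :
    MeasurePreserving (mirror u) (sphVol n) (sphVol n) :=
  (mirror u).measurePreserving_hausdorffMeasure _

lemma sphVol_mirror_preimage (u : Esp n) (s : Set (Sph n)) :
    sphVol n (mirror u ⁻¹' s) = sphVol n s :=
  (mirror u).hausdorffMeasure_preimage _ s

/-- The antipodal map as an isometry of the sphere. -/
def antipode : Sph n ≃ᵢ Sph n where
  toFun x := -x
  invFun x := -x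
  left_inv x := neg_neg x
  right_inv x := neg_neg x
  isometry_toFun := by
    intro x y
    rw [Subtype.edist_eq, Subtype.edist_eq]
    exact edist_neg_neg _ _

lemma sphVol_neg_preimage (s : Set (Sph n)) : sphVol n ((fun x => -x) ⁻¹' s) = sphVol n s :=
  (antipode (n := n)).hausdorffMeasure_preimage _ s

lemma sphVol_ball_eq (z w : Sph n) (r : ℝ) : sphVol n (sphBall z r) = sphVol n (sphBall w r) := by
  set ρ := mirror ((z : Esp n) - (w : Esp n)) with hρ
  rw [← sphVol_mirror_preimage ((z : Esp n) - (w : Esp n)) (sphBall w r)]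
  congr 1
  ext x
  have h : ip (ρ x) w = ip x z := by
    rw [← mirror_sub z w, ← hρ, hρ, ip_mirror_mirror]
  unfold ip at h
  simp only [sphBall, gd, mem_ofPred_eq, mem_preimage]
  rw [h]

/-- The north pole. -/
def northPole (n : ℕ) : Sph n := ⟨EuclideanSpace.single 0 1, by simp⟩

/-- A property of neighbourhoods that holds at some point and is invariant under isometries holds
at every point, by homogeneity of the sphere. -/
lemma exists_nhds_measure {P : ENNReal → Prop} {x : Sph n} {U : Set (Sph n)} (hU : U ∈ 𝓝 x)
    (hP : P (sphVol n U)) (y : Sph n) : ∃ V ∈ 𝓝 y, P (sphVol n V) := by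
  refine ⟨mirror ((x : Esp n) - (y : Esp n)) ⁻¹' U, ?_, by rwa [sphVol_mirror_preimage]⟩
  refine (mirror _).continuous.continuousAt.preimage_mem_nhds ?_
  rwa [mirror_sub']

lemma exists_nhds_finite (n : ℕ) : ∃ U ∈ 𝓝 (northPole n), sphVol n U < ⊤ := by
  -- The inverse of the central projection onto a tangent hyperplane is smooth, hence locally
  -- Lipschitz.
  set c : (Fin n → ℝ) → Esp n := fun v => WithLp.toLp 2 (Fin.cons 1 v : Fin (n + 1) → ℝ) with hc
  have hc_diff : ContDiff ℝ 1 c := by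
    rw [contDiff_euclidean]
    intro i
    refine Fin.cases ?_ (fun j => ?_) i
    · simp only [hc, Fin.cons_zero]; exact contDiff_const
    · simp only [hc, Fin.cons_succ]; exact contDiff_apply ℝ ℝ j
  have hc_ne : ∀ v, c v ≠ 0 := by
    intro v h
    have := congrArg (fun w : Esp n => w 0) h
    simp [hc] at this
  set φ : (Fin n → ℝ) → Esp n := fun v => ‖c v‖⁻¹ • c v with hφ
  have hφ_diff : ContDiffAt ℝ 1 φ 0 := by
    have h1 : ContDiffAt ℝ 1 (fun v => ‖c v‖⁻¹) 0 :=
      (hc_diff.contDiffAt.norm ℝ (hc_ne 0)).inv (norm_ne_zero_iff.mpr (hc_ne 0))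
    exact h1.smul hc_diff.contDiffAt
  obtain ⟨K, t, ht, hL⟩ := hφ_diff.exists_lipschitzOnWith
  obtain ⟨r, hr, hrt⟩ := Metric.nhds_basis_closedBall.mem_iff.mp ht
  have hfin : μH[(n : ℝ)] (φ '' Metric.closedBall 0 r) < ⊤ := by
    refine lt_of_le_of_lt ((hL.mono hrt).hausdorffMeasure_image_le n.cast_nonneg) ?_
    have h1 : (μH[(n : ℝ)] : Measure (Fin n → ℝ)) = volume := by
      have := hausdorffMeasure_pi_real (ι := Fin n)
      rwa [Fintype.card_fin] at this
    rw [h1]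
    exact ENNReal.mul_lt_top (ENNReal.rpow_lt_top_of_nonneg n.cast_nonneg ENNReal.coe_ne_top)
      Metric.isBounded_closedBall.measure_lt_top
  set ψ : Sph n → (Fin n → ℝ) := fun x i => (x : Esp n) i.succ / (x : Esp n) 0 with hψ
  have h0 : (northPole n : Esp n) 0 = 1 := by simp [northPole]
  have hψc : ContinuousAt ψ (northPole n) := by
    rw [continuousAt_pi]
    intro i
    refine ContinuousAt.div ?_ ?_ (by rw [h0]; norm_num) <;>
    · apply Continuous.continuousAt; fun_prop
  have hψ0 : ψ (northPole n) = 0 := by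
    funext i; simp [hψ, northPole]
  have hV : {x : Sph n | 0 < (x : Esp n) 0} ∈ 𝓝 (northPole n) := by
    refine (isOpen_lt continuous_const ?_).mem_nhds ?_
    · fun_prop
    · rw [mem_ofPred_eq, h0]; norm_num
  refine ⟨ψ ⁻¹' Metric.closedBall 0 r ∩ {x : Sph n | 0 < (x : Esp n) 0},
    inter_mem (hψc.preimage_mem_nhds ?_) hV, ?_⟩
  · rw [hψ0]; exact Metric.closedBall_mem_nhds _ hr
  · unfold sphVol
    rw [← isometry_subtype_coe.hausdorffMeasure_image (Or.inl n.cast_nonneg)]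
    refine lt_of_le_of_lt (measure_mono ?_) hfin
    rintro _ ⟨x, ⟨hx1, hx2⟩, rfl⟩
    refine ⟨ψ x, hx1, ?_⟩
    have hx2' : 0 < (x : Esp n) 0 := hx2
    have hcx : c (ψ x) = ((x : Esp n) 0)⁻¹ • (x : Esp n) := by
      ext i
      refine Fin.cases ?_ (fun j => ?_) i
      · simp [hc, hx2'.ne']
      · simp [hc, hψ, div_eq_inv_mul]
    simp only [hφ]
    rw [hcx, norm_smul, sph_norm, mul_one, norm_inv, inv_inv, smul_smul, Real.norm_eq_abs,
      abs_of_pos hx2', mul_inv_cancel₀ hx2'.ne', one_smul]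

instance sphVol_isFinite (n : ℕ) : IsFiniteMeasure (sphVol n) := by
  obtain ⟨U, hU, hfin⟩ := exists_nhds_finite n
  have : IsLocallyFiniteMeasure (sphVol n) :=
    ⟨fun y => exists_nhds_measure (P := fun m => m < ⊤) hU hfin y⟩
  exact ⟨isCompact_univ.measure_lt_top⟩

lemma sphVol_univ_pos (n : ℕ) : sphVol n univ ≠ 0 := by
  -- The orthogonal projection forgetting the first coordinate is Lipschitz, and its image
  -- contains a ball of `ℝⁿ`.
  intro h0
  set pr : Sph n → (Fin n → ℝ) := fun x i => (x : Esp n) i.succ with hpr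
  have hL : LipschitzWith 1 pr := by
    refine LipschitzWith.of_dist_le_mul fun x y => ?_
    rw [NNReal.coe_one, one_mul, dist_pi_le_iff dist_nonneg]
    intro i
    rw [Real.dist_eq, Subtype.dist_eq, dist_eq_norm]
    exact PiLp.norm_apply_le ((x : Esp n) - (y : Esp n)) i.succ
  have h1 := hL.hausdorffMeasure_image_le (d := (n : ℝ)) n.cast_nonneg univ
  have h2 : (μH[(n : ℝ)] : Measure (Fin n → ℝ)) = volume := by
    have := hausdorffMeasure_pi_real (ι := Fin n)
    rwa [Fintype.card_fin] at this
  have h0' : (μH[(n : ℝ)] : Measure (Sph n)) univ = 0 := h0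
  rw [h2, h0', mul_zero] at h1
  have hsub : Metric.ball (0 : Fin n → ℝ) (1 / (n + 1)) ⊆ pr '' univ := by
    intro v hv
    have hn1 : (0 : ℝ) < n + 1 := by positivity
    have hvi : ∀ i, |v i| ≤ 1 / (n + 1) := by
      intro i
      have := norm_le_pi_norm v i
      rw [mem_ball_zero_iff] at hv
      exact this.trans hv.le
    have hsum : ∑ i, v i ^ 2 ≤ 1 := by
      have : ∀ i ∈ Finset.univ, v i ^ 2 ≤ 1 / ((n : ℝ) + 1) := by
        intro i _
        rw [← sq_abs]
        have h3 : 1 / ((n : ℝ) + 1) ≤ 1 := by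
          rw [div_le_one hn1]; linarith [(n.cast_nonneg : (0 : ℝ) ≤ n)]
        nlinarith [hvi i, abs_nonneg (v i)]
      refine (Finset.sum_le_card_nsmul _ _ _ this).trans ?_
      rw [Finset.card_univ, Fintype.card_fin, nsmul_eq_mul, mul_one_div, div_le_one hn1]
      linarith
    refine ⟨⟨WithLp.toLp 2 (Fin.cons (Real.sqrt (1 - ∑ i, v i ^ 2)) v : Fin (n + 1) → ℝ), ?_⟩,
      mem_univ _, ?_⟩
    · rw [mem_sphere_zero_iff_norm, EuclideanSpace.norm_eq, Real.sqrt_eq_one]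
      simp only [Real.norm_eq_abs, sq_abs]
      rw [Fin.sum_univ_succ]
      simp only [Fin.cons_zero, Fin.cons_succ]
      rw [Real.sq_sqrt (by linarith)]
      ring
    · funext i; simp [hpr]
  have h3 : volume (Metric.ball (0 : Fin n → ℝ) (1 / (n + 1))) = 0 :=
    measure_mono_null hsub (le_antisymm h1 bot_le)
  exact (Metric.measure_ball_pos volume _ (by positivity)).ne' h3

instance sphVol_isOpenPos (n : ℕ) : (sphVol n).IsOpenPosMeasure := by
  refine ⟨fun U hU ⟨x, hx⟩ h0 => sphVol_univ_pos n ?_⟩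
  refine measure_null_of_locally_null _ fun y _ => ?_
  obtain ⟨V, hV, h⟩ := exists_nhds_measure (P := fun m => m = 0) (hU.mem_nhds hx) h0 y
  exact ⟨V, mem_nhdsWithin_of_mem_nhds hV, h⟩

end Measure

/-! ### Two-point symmetrization -/

section Polarization
variable {n : ℕ}

/-- The two-point symmetrization (polarization) of `A` with respect to the hyperplane `uᗮ`: the
mass of `A` is moved to the side of `u` whenever there is room for it. -/
def pol (u : Esp n) (A : Set (Sph n)) : Set (Sph n) :=
  ((A ∪ mirror u ⁻¹' A) ∩ {x | 0 ≤ inner ℝ (x : Esp n) u}) ∪ (A ∩ mirror u ⁻¹' A)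

/-- The part of `A` that is moved by `pol u`. -/
def moved (u : Esp n) (A : Set (Sph n)) : Set (Sph n) :=
  {x | x ∈ A ∧ inner ℝ (x : Esp n) u < 0 ∧ mirror u x ∉ A}

lemma isClosed_pol (u : Esp n) {A : Set (Sph n)} (hA : IsClosed A) : IsClosed (pol u A) := by
  have h := hA.preimage (mirror u).continuous
  refine ((hA.union h).inter (isClosed_le continuous_const ?_)).union (hA.inter h)
  fun_prop

lemma pol_nonempty (u : Esp n) {A : Set (Sph n)} (hA : A.Nonempty) : (pol u A).Nonempty := by
  obtain ⟨x, hx⟩ := hA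
  rcases le_total 0 (inner ℝ (x : Esp n) u) with h | h
  · exact ⟨x, Or.inl ⟨Or.inl hx, h⟩⟩
  · refine ⟨mirror u x, Or.inl ⟨Or.inr ?_, ?_⟩⟩
    · rw [mem_preimage, mirror_mirror]; exact hx
    · change 0 ≤ inner ℝ (mirror u x : Esp n) u
      rw [inner_mirror_self]; linarith

lemma measurableSet_moved (u : Esp n) {A : Set (Sph n)} (hA : IsClosed A) :
    MeasurableSet (moved u A) := by
  have h := hA.preimage (mirror u).continuous
  have ho : IsOpen {x : Sph n | inner ℝ (x : Esp n) u < 0} :=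
    isOpen_lt (by fun_prop) continuous_const
  exact hA.measurableSet.inter (ho.measurableSet.inter h.measurableSet.compl)

lemma pol_eq (u : Esp n) (A : Set (Sph n)) :
    pol u A = (A \ moved u A) ∪ mirror u ⁻¹' moved u A := by
  ext x
  have h1 := inner_mirror_self u x
  have h2 := mirror_mirror u x
  have h3 : inner ℝ (x : Esp n) u = 0 → mirror u x = x := mirror_eq_self
  simp only [pol, moved, mem_union, mem_inter_iff, mem_preimage, Set.mem_sdiff, mem_ofPred_eq]
  rw [h1, h2]
  by_cases hA : x ∈ A <;> by_cases hB : mirror u x ∈ A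
  · simp [hA, hB]
  · simp [hA, hB]
  · simp only [hA, hB, false_or, true_and, false_and, or_false, not_false_eq_true,
      and_true]
    constructor
    · intro h
      rcases h.lt_or_eq with h | h
      · linarith
      · exact absurd hB (by rw [h3 h.symm]; exact hA)
    · intro h; linarith
  · simp [hA, hB]

lemma disjoint_pol (u : Esp n) (A : Set (Sph n)) :
    Disjoint (A \ moved u A) (mirror u ⁻¹' moved u A) := by
  rw [Set.disjoint_left]
  intro x hx hx'
  exact hx'.2.2 (by rw [mirror_mirror]; exact hx.1)

/-- Two points on the same side of a mirror are at most as far apart as one of them is from the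
mirror image of the other. -/
lemma ip_mirror_le {u : Esp n} {x y : Sph n} (hx : 0 ≤ inner ℝ (x : Esp n) u)
    (hy : 0 ≤ inner ℝ (y : Esp n) u) : ip x (mirror u y) ≤ ip x y := by
  rw [ip_mirror_eq]
  have : 0 ≤ 2 * inner ℝ (x : Esp n) u * inner ℝ (y : Esp n) u / ‖u‖ ^ 2 := by positivity
  linarith

/-- `A` and `B` are at mutual distance at most `arccos c`. -/
def PairLe (c : ℝ) (A B : Set (Sph n)) : Prop := ∀ x ∈ A, ∀ y ∈ B, c ≤ ip x y

lemma PairLe.pol {c : ℝ} {A B : Set (Sph n)} (h : PairLe c A B) (u : Esp n) :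
    PairLe c (pol u A) (pol u B) := by
  have e1 := fun x y : Sph n => ip_mirror_mirror u x y
  have e2 := fun x y : Sph n => ip_mirror_left u x y
  rintro x (⟨hx | hx, hxu⟩ | ⟨hx, hx'⟩) y (⟨hy | hy, hyu⟩ | ⟨hy, hy'⟩)
  · exact h x hx y hy
  · exact (h x hx _ hy).trans (ip_mirror_le hxu hyu)
  · exact h x hx y hy
  · exact ((h _ hx y hy).trans_eq (e2 x y)).trans (ip_mirror_le hxu hyu)
  · exact (h _ hx _ hy).trans_eq (e1 x y)
  · exact (h _ hx _ hy').trans_eq (e1 x y)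
  · exact h x hx y hy
  · exact (h _ hx' _ hy).trans_eq (e1 x y)
  · exact h x hx y hy

lemma sphVol_pol (u : Esp n) {A : Set (Sph n)} (hA : IsClosed A) :
    sphVol n (pol u A) = sphVol n A := by
  have hm := measurableSet_moved u hA
  rw [pol_eq, measure_union (disjoint_pol u A) ((mirror u).continuous.measurable hm),
    sphVol_mirror_preimage, add_comm, measure_add_sdiff hm.nullMeasurableSet,
    union_eq_self_of_subset_left fun x hx => hx.1]

/-- Surface measure weighted by a density that increases towards `e`. -/
def weighted (e : Sph n) : Measure (Sph n) :=
  (sphVol n).withDensity fun x => ENNReal.ofReal (2 + ip x e)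

lemma measurable_weight (e : Sph n) :
    Measurable fun x : Sph n => ENNReal.ofReal (2 + ip x e) :=
  (continuous_const.add (continuous_ip_right e)).measurable.ennreal_ofReal

instance weighted_isFinite (e : Sph n) : IsFiniteMeasure (weighted e) := by
  refine isFiniteMeasure_withDensity ?_
  refine ne_top_of_le_ne_top (b := ∫⁻ _, ENNReal.ofReal 3 ∂(sphVol n)) ?_ (lintegral_mono ?_)
  · rw [lintegral_const]
    exact ENNReal.mul_ne_top ENNReal.ofReal_ne_top (measure_ne_top _ _)
  · intro x
    exact ENNReal.ofReal_le_ofReal (by linarith [ip_le_one x e])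

lemma weight_lt {e : Sph n} {u : Esp n} (hu : 0 < inner ℝ (e : Esp n) u) {x : Sph n}
    (hx : inner ℝ (x : Esp n) u < 0) :
    ENNReal.ofReal (2 + ip x e) < ENNReal.ofReal (2 + ip (mirror u x) e) := by
  have hu0 : u ≠ 0 := by rintro rfl; simp at hu
  have hpos : 0 < ‖u‖ ^ 2 := by positivity
  have h : ip x e < ip (mirror u x) e := by
    rw [ip_mirror_left, ip_mirror_eq]
    have : 2 * inner ℝ (x : Esp n) u * inner ℝ (e : Esp n) u / ‖u‖ ^ 2 < 0 := by
      apply div_neg_of_neg_of_pos _ hpos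
      nlinarith
    linarith
  exact (ENNReal.ofReal_lt_ofReal_iff (by linarith [neg_one_le_ip (mirror u x) e])).mpr
    (by linarith)

lemma weighted_mirror_preimage (e : Sph n) (u : Esp n) {G : Set (Sph n)} (hG : MeasurableSet G) :
    weighted e (mirror u ⁻¹' G) = ∫⁻ x in G, ENNReal.ofReal (2 + ip (mirror u x) e) ∂(sphVol n) := by
  have hG' : MeasurableSet (mirror u ⁻¹' G) := (mirror u).continuous.measurable hG
  have hemb : MeasurableEmbedding (mirror u) := (mirror u).toHomeomorph.measurableEmbedding
  rw [weighted, withDensity_apply _ hG',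
    ← (measurePreserving_mirror u).setLIntegral_comp_preimage_emb hemb
      (fun x => ENNReal.ofReal (2 + ip (mirror u x) e)) G]
  simp only [mirror_mirror]

lemma weighted_le_pol {e : Sph n} {u : Esp n} (hu : 0 < inner ℝ (e : Esp n) u)
    {A : Set (Sph n)} (hA : IsClosed A) :
    weighted e A ≤ weighted e (pol u A) ∧
      (weighted e (pol u A) ≤ weighted e A → sphVol n (moved u A) = 0) := by
  have hm := measurableSet_moved u hA
  have hsub : moved u A ⊆ A := fun x hx => hx.1
  have h1 : weighted e (pol u A) = weighted e (A \ moved u A) +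
      ∫⁻ x in moved u A, ENNReal.ofReal (2 + ip (mirror u x) e) ∂(sphVol n) := by
    rw [pol_eq, measure_union (disjoint_pol u A) ((mirror u).continuous.measurable hm),
      weighted_mirror_preimage e u hm]
  have h2 : weighted e A = weighted e (A \ moved u A) +
      ∫⁻ x in moved u A, ENNReal.ofReal (2 + ip x e) ∂(sphVol n) := by
    rw [← withDensity_apply _ hm]
    change _ = _ + weighted e (moved u A)
    have h := measure_add_sdiff (μ := weighted e) hm.nullMeasurableSet A
    rw [union_eq_self_of_subset_left hsub] at h
    exact h.symm.trans (add_comm _ _)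
  have h3 : weighted e (A \ moved u A) ≠ ⊤ := measure_ne_top _ _
  refine ⟨?_, fun h => ?_⟩
  · rw [h1, h2]
    gcongr _ + ?_
    exact setLIntegral_mono' hm fun x hx => (weight_lt hu hx.2.1).le
  · by_contra hne
    refine absurd h (not_le.mpr ?_)
    rw [h1, h2]
    refine ENNReal.add_lt_add_left h3 ?_
    refine setLIntegral_strict_mono hm hne ?_ ?_ (Eventually.of_forall fun x hx => weight_lt hu hx.2.1)
    · exact ((measurable_weight e).comp (mirror u).continuous.measurable)
    · rw [← withDensity_apply _ hm]
      exact measure_ne_top (weighted e) _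

end Polarization

/-! ### The isodiametric inequality for pairs of sets -/

section PairInequality
open TopologicalSpace
variable {n : ℕ}

lemma upperSemicontinuous_measure (μ : Measure (Sph n)) [IsFiniteMeasure μ] :
    UpperSemicontinuous fun K : NonemptyCompacts (Sph n) => μ (K : Set (Sph n)) := by
  rw [upperSemicontinuous_iff]
  intro K
  rw [upperSemicontinuousAt_iff]
  intro v hv
  obtain ⟨U, hKU, hU, hUv⟩ := (K : Set (Sph n)).exists_isOpen_lt_of_lt v hv
  filter_upwards [(NonemptyCompacts.isOpen_subsets_of_isOpen hU).mem_nhds hKU] with K' hK'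
  exact (measure_mono hK').trans_lt hUv

lemma isClosed_pairLe (c : ℝ) :
    IsClosed {p : NonemptyCompacts (Sph n) × NonemptyCompacts (Sph n) |
      PairLe c (p.1 : Set (Sph n)) p.2} := by
  rw [← isOpen_compl_iff, isOpen_iff_mem_nhds]
  rintro ⟨A, B⟩ h
  simp only [mem_compl_iff, mem_ofPred_eq, PairLe, not_forall, not_le] at h
  obtain ⟨x, hx, y, hy, hxy⟩ := h
  have ho : IsOpen {p : Sph n × Sph n | ip p.1 p.2 < c} := isOpen_lt continuous_ip continuous_const
  obtain ⟨U, V, hU, hV, hxU, hyV, hUV⟩ := isOpen_prod_iff.mp ho x y hxy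
  filter_upwards [((NonemptyCompacts.isOpen_inter_nonempty_of_isOpen hU).prod
    (NonemptyCompacts.isOpen_inter_nonempty_of_isOpen hV)).mem_nhds
    ⟨⟨x, hx, hxU⟩, ⟨y, hy, hyV⟩⟩]
  rintro ⟨A', B'⟩ ⟨⟨x', hx', hxU'⟩, ⟨y', hy', hyV'⟩⟩ h'
  have h1 : ip x' y' < c := hUV (show (x', y') ∈ U ×ˢ V from ⟨hxU', hyV'⟩)
  exact absurd (h' x' hx' y' hy') (not_le.mpr h1)

/-- Among all pairs that are as large as `(A, B)` and satisfy the same distance constraint, one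
maximizes the mass concentrated near `e`; it cannot be improved by any polarization towards `e`. -/
lemma exists_polarized (e : Sph n) {c : ℝ} {A B : Set (Sph n)} (hA : IsClosed A) (hB : IsClosed B)
    (hA0 : A.Nonempty) (hB0 : B.Nonempty) (h : PairLe c A B) :
    ∃ A' B' : Set (Sph n), IsClosed A' ∧ IsClosed B' ∧ PairLe c A' B' ∧
      sphVol n A ≤ sphVol n A' ∧ sphVol n B ≤ sphVol n B' ∧
      ∀ u : Esp n, 0 < inner ℝ (e : Esp n) u →
        sphVol n (moved u A') = 0 ∧ sphVol n (moved u B') = 0 := by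
  set S : Set (NonemptyCompacts (Sph n) × NonemptyCompacts (Sph n)) :=
    {p | PairLe c (p.1 : Set (Sph n)) p.2} ∩
      ({p | sphVol n A ≤ sphVol n (p.1 : Set (Sph n))} ∩
        {p | sphVol n B ≤ sphVol n (p.2 : Set (Sph n))}) with hS
  have husc1 : ∀ (μ : Measure (Sph n)) [IsFiniteMeasure μ], UpperSemicontinuous
      fun p : NonemptyCompacts (Sph n) × NonemptyCompacts (Sph n) => μ (p.1 : Set (Sph n)) :=
    fun μ _ => UpperSemicontinuous.comp (f := fun K : NonemptyCompacts (Sph n) => μ K)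
      (upperSemicontinuous_measure μ) continuous_fst
  have husc2 : ∀ (μ : Measure (Sph n)) [IsFiniteMeasure μ], UpperSemicontinuous
      fun p : NonemptyCompacts (Sph n) × NonemptyCompacts (Sph n) => μ (p.2 : Set (Sph n)) :=
    fun μ _ => UpperSemicontinuous.comp (f := fun K : NonemptyCompacts (Sph n) => μ K)
      (upperSemicontinuous_measure μ) continuous_snd
  have hSc : IsClosed S := by
    refine (isClosed_pairLe c).inter (IsClosed.inter ?_ ?_)
    · exact UpperSemicontinuous.isClosed_preimage (husc1 (sphVol n)) (sphVol n A)
    · exact UpperSemicontinuous.isClosed_preimage (husc2 (sphVol n)) (sphVol n B)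
  have hSne : S.Nonempty :=
    ⟨(⟨⟨A, hA.isCompact⟩, hA0⟩, ⟨⟨B, hB.isCompact⟩, hB0⟩), h, le_refl (sphVol n A),
      le_refl (sphVol n B)⟩
  obtain ⟨⟨A', B'⟩, ⟨hP, hA', hB'⟩, hmax⟩ :=
    UpperSemicontinuousOn.exists_isMaxOn hSne hSc.isCompact
      (UpperSemicontinuous.upperSemicontinuousOn
        (UpperSemicontinuous.add (husc1 (weighted e)) (husc2 (weighted e))) S)
  refine ⟨A', B', A'.isCompact.isClosed, B'.isCompact.isClosed, hP, hA', hB', fun u hu => ?_⟩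
  have hcA := A'.isCompact.isClosed
  have hcB := B'.isCompact.isClosed
  have hmem : ((⟨⟨pol u A', (isClosed_pol u hcA).isCompact⟩, pol_nonempty u A'.nonempty⟩,
      ⟨⟨pol u B', (isClosed_pol u hcB).isCompact⟩, pol_nonempty u B'.nonempty⟩) :
      NonemptyCompacts (Sph n) × NonemptyCompacts (Sph n)) ∈ S :=
    ⟨hP.pol u, hA'.trans_eq (sphVol_pol u hcA).symm, hB'.trans_eq (sphVol_pol u hcB).symm⟩
  have hle : weighted e (pol u A') + weighted e (pol u B') ≤
      weighted e (A' : Set (Sph n)) + weighted e (B' : Set (Sph n)) := hmax hmem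
  obtain ⟨a1, a2⟩ := weighted_le_pol hu hcA
  obtain ⟨b1, b2⟩ := weighted_le_pol hu hcB
  refine ⟨a2 ?_, b2 ?_⟩
  · by_contra hlt
    exact absurd hle (not_le.mpr (ENNReal.add_lt_add_of_lt_of_le (measure_ne_top _ _)
      (not_le.mp hlt) b1))
  · by_contra hlt
    exact absurd hle (not_le.mpr (ENNReal.add_lt_add_of_le_of_lt (measure_ne_top _ _)
      a1 (not_le.mp hlt)))

/-- A closed set of positive measure that is stable, up to null sets, under all polarizations
towards `e` agrees up to a null set with a ball centred at `e`. -/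
lemma exists_ball_of_moved_null (hn : 1 ≤ n) (e : Sph n) {A : Set (Sph n)} (hA : IsClosed A)
    (h0 : sphVol n A ≠ 0)
    (hmv : ∀ u : Esp n, 0 < inner ℝ (e : Esp n) u → sphVol n (moved u A) = 0) :
    ∃ t, 0 ≤ t ∧ t ≤ Real.pi ∧ sphBall e t ⊆ A ∧ sphVol n A ≤ sphVol n (sphBall e t) := by
  set A₀ := ((sphVol n).restrict A).support with hA₀
  have hcl : IsClosed A₀ := Measure.isClosed_support
  have hsub : A₀ ⊆ A := by
    refine Measure.support_subset_of_isClosed hA ?_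
    rw [mem_ae_iff, Measure.restrict_apply hA.measurableSet.compl]
    simp
  have hvol : sphVol n A ≤ sphVol n A₀ := by
    have h1 : sphVol n (A₀ᶜ ∩ A) = 0 := by
      rw [← Measure.restrict_apply hcl.measurableSet.compl]
      exact Measure.measure_compl_support
    calc sphVol n A ≤ sphVol n (A₀ ∪ (A₀ᶜ ∩ A)) :=
          measure_mono fun x hx => by by_cases h : x ∈ A₀ <;> simp [h, hx]
      _ ≤ sphVol n A₀ + sphVol n (A₀ᶜ ∩ A) := measure_union_le _ _
      _ = sphVol n A₀ := by rw [h1, add_zero]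
  have hne : A₀.Nonempty := by
    rw [nonempty_iff_ne_empty]
    intro h
    rw [h, measure_empty] at hvol
    exact h0 (le_antisymm hvol bot_le)
  -- `A₀` contains, with each point, all points closer to `e`.
  have hkey : ∀ x ∈ A₀, ∀ y, ip x e < ip y e → y ∈ A₀ := by
    intro x hx y hxy
    rw [hA₀, Measure.mem_support_iff_forall]
    intro U hU
    set u : Esp n := (y : Esp n) - (x : Esp n) with hu
    have hue : 0 < inner ℝ (e : Esp n) u := by
      rw [hu, inner_sub_right, real_inner_comm (y : Esp n), real_inner_comm (x : Esp n)]
      exact sub_pos.mpr hxy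
    have hne' : x ≠ y := by rintro rfl; exact lt_irrefl _ hxy
    have hxu : inner ℝ (x : Esp n) u < 0 := by
      rw [hu, inner_sub_right]
      have h1 := ip_self x
      have h2 := ip_lt_one hne'
      unfold ip at h1 h2
      linarith
    have ho : IsOpen {z : Sph n | inner ℝ (z : Esp n) u < 0} :=
      isOpen_lt (by fun_prop) continuous_const
    have hW : mirror u ⁻¹' U ∩ {z : Sph n | inner ℝ (z : Esp n) u < 0} ∈ 𝓝 x := by
      refine inter_mem ((mirror u).continuous.continuousAt.preimage_mem_nhds ?_) (ho.mem_nhds hxu)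
      rwa [hu, mirror_sub']
    have hpos := (Measure.mem_support_iff_forall x).mp hx _ hW
    rw [Measure.restrict_apply' hA.measurableSet] at hpos ⊢
    have hle : sphVol n (mirror u ⁻¹' U ∩ {z : Sph n | inner ℝ (z : Esp n) u < 0} ∩ A) ≤
        sphVol n (mirror u ⁻¹' (U ∩ A)) := by
      calc _ ≤ sphVol n (mirror u ⁻¹' (U ∩ A) ∪ moved u A) := by
            refine measure_mono ?_
            rintro z ⟨⟨hz1, hz2⟩, hz3⟩
            by_cases hz : mirror u z ∈ A
            · exact Or.inl ⟨hz1, hz⟩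
            · exact Or.inr ⟨hz3, hz2, hz⟩
        _ ≤ _ := measure_union_le _ _
        _ = _ := by rw [hmv u hue, add_zero]
    rw [sphVol_mirror_preimage] at hle
    exact hpos.trans_le hle
  obtain ⟨x, hx, hmin⟩ := hcl.isCompact.exists_isMinOn hne (continuous_ip_right e).continuousOn
  refine ⟨gd x e, gd_nonneg _ _, gd_le_pi _ _, ?_, hvol.trans (measure_mono fun y hy => ?_)⟩
  · refine Subset.trans (fun y hy => ?_) hsub
    rw [mem_sphBall_iff (gd_nonneg _ _) (gd_le_pi _ _), cos_gd] at hy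
    have he : e ∈ A₀ := by
      by_cases hxe : x = e
      · rwa [← hxe]
      · exact hkey x hx e (by rw [ip_self]; exact ip_lt_one hxe)
    by_cases hye : y = e
    · rwa [hye]
    obtain ⟨g, g0, g1, gc, gi⟩ := exists_geodesic hn e y
    have hpos : 0 < gd e y := by
      refine lt_of_le_of_ne (gd_nonneg _ _) fun h => hye ?_
      rw [← g1, ← h, g0]
    have hcl' : y ∈ closure (g '' Ico 0 (gd e y)) := by
      rw [← g1]
      refine image_closure_subset_closure_image gc (mem_image_of_mem g ?_)
      rw [g1, closure_Ico hpos.ne]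
      exact right_mem_Icc.mpr hpos.le
    refine closure_minimal ?_ hcl hcl'
    rintro _ ⟨a, ha, rfl⟩
    refine hkey x hx _ (hy.trans_lt ?_)
    have h1 : ip (g a) e = Real.cos a := by rw [← g0, gi, sub_zero]
    rw [h1, ip_comm, ← cos_gd]
    exact Real.strictAntiOn_cos ⟨ha.1, ha.2.le.trans (gd_le_pi _ _)⟩
      ⟨hpos.le, gd_le_pi _ _⟩ ha.2
  · rw [mem_sphBall_iff (gd_nonneg _ _) (gd_le_pi _ _), cos_gd]
    exact hmin hy

lemma isClosed_sphBall (w : Sph n) (r : ℝ) : IsClosed (sphBall w r) := by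
  have : Continuous fun x : Sph n => gd x w := Real.continuous_arccos.comp (continuous_ip_right w)
  exact isClosed_le this continuous_const

lemma sphBall_mono (w : Sph n) {r s : ℝ} (h : r ≤ s) : sphBall w r ⊆ sphBall w s :=
  fun _ hx => le_trans hx h

lemma sphVol_ball_lt (hn : 1 ≤ n) (e : Sph n) {a b : ℝ} (ha : 0 ≤ a) (hab : a < b)
    (hb : b ≤ Real.pi) : sphVol n (sphBall e a) < sphVol n (sphBall e b) := by
  have ho1 : IsOpen {x : Sph n | ip x e < Real.cos a} :=
    isOpen_lt (continuous_ip_right e) continuous_const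
  have ho2 : IsOpen {x : Sph n | Real.cos b < ip x e} :=
    isOpen_lt continuous_const (continuous_ip_right e)
  obtain ⟨g, g0, -, -, gi⟩ := exists_geodesic hn e e
  have hpos : 0 < sphVol n ({x : Sph n | ip x e < Real.cos a} ∩ {x | Real.cos b < ip x e}) := by
    refine (ho1.inter ho2).measure_pos _ ⟨g ((a + b) / 2), ?_, ?_⟩
    all_goals
      simp only [mem_ofPred_eq]
      rw [← g0, gi, sub_zero]
      exact Real.strictAntiOn_cos ⟨by linarith, by linarith⟩ ⟨by linarith, by linarith⟩
        (by linarith)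
  have hd : Disjoint (sphBall e a)
      ({x : Sph n | ip x e < Real.cos a} ∩ {x | Real.cos b < ip x e}) := by
    rw [Set.disjoint_left]
    intro x hx hx'
    rw [mem_sphBall_iff ha (by linarith)] at hx
    exact absurd hx (not_le.mpr hx'.1)
  calc sphVol n (sphBall e a) < sphVol n (sphBall e a) +
        sphVol n ({x : Sph n | ip x e < Real.cos a} ∩ {x | Real.cos b < ip x e}) :=
        ENNReal.lt_add_right (measure_ne_top _ _) hpos.ne'
    _ = _ := (measure_union hd (ho1.inter ho2).measurableSet).symm
    _ ≤ _ := by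
      refine measure_mono (union_subset (sphBall_mono e hab.le) fun x hx => ?_)
      rw [mem_sphBall_iff (by linarith) hb]
      exact hx.2.le

/-- If `A` has at least the volume of a ball of radius `r` and all distances between `A` and `B`
are at most `D`, then `B` has at most the volume of a ball of radius `D - r`. -/
theorem pair_isodiametric (hn : 1 ≤ n) (e : Sph n) {A B : Set (Sph n)} (hA : IsClosed A)
    (hB : IsClosed B) {D r : ℝ} (hr : 0 < r) (hrD : r ≤ D) (hD : D < Real.pi)
    (h : PairLe (Real.cos D) A B) (hvol : sphVol n (sphBall e r) ≤ sphVol n A) :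
    sphVol n B ≤ sphVol n (sphBall e (D - r)) := by
  by_cases hB0 : sphVol n B = 0
  · rw [hB0]; exact bot_le
  have hA0 : sphVol n A ≠ 0 := by
    have := (sphVol_ball_lt hn e le_rfl hr (by linarith)).trans_le hvol
    exact (bot_le.trans_lt this).ne'
  obtain ⟨A', B', hA', hB', hP, hvA, hvB, hmv⟩ := exists_polarized e hA hB
    (nonempty_of_measure_ne_zero hA0) (nonempty_of_measure_ne_zero hB0) h
  obtain ⟨a, a0, a1, haA, hvolA⟩ := exists_ball_of_moved_null hn e hA'
    (fun h => hA0 (le_antisymm (hvA.trans_eq h) bot_le)) fun u hu => (hmv u hu).1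
  obtain ⟨b, b0, b1, hbB, hvolB⟩ := exists_ball_of_moved_null hn e hB'
    (fun h => hB0 (le_antisymm (hvB.trans_eq h) bot_le)) fun u hu => (hmv u hu).2
  obtain ⟨g, g0, -, -, gi⟩ := exists_geodesic hn e e
  have hge : ∀ t, ip (g t) e = Real.cos t := fun t => by
    rw [← g0, gi, sub_zero]
  have hga : g a ∈ A' := haA (by rw [mem_sphBall_iff a0 a1, hge])
  have hab : a + b ≤ D := by
    rcases le_total (a + b) Real.pi with hle | hle
    · have hgb : g (-b) ∈ B' := hbB (by rw [mem_sphBall_iff b0 b1, hge, Real.cos_neg])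
      have h1 := hP _ hga _ hgb
      rw [gi, sub_neg_eq_add] at h1
      exact (Real.strictAntiOn_cos.le_iff_ge ⟨by linarith, hD.le⟩ ⟨by linarith, hle⟩).mp h1
    · have hgb : g (a - Real.pi) ∈ B' := hbB (by
        rw [mem_sphBall_iff b0 b1, hge, ← Real.cos_neg (a - Real.pi)]
        exact Real.cos_le_cos_of_nonneg_of_le_pi (by linarith) b1 (by linarith))
      have h1 := hP _ hga _ hgb
      rw [gi, sub_sub_cancel] at h1
      exact absurd h1 (not_le.mpr
        (Real.strictAntiOn_cos ⟨by linarith, hD.le⟩ ⟨Real.pi_pos.le, le_rfl⟩ hD))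
  have hra : r ≤ a := by
    by_contra hlt
    exact absurd ((hvol.trans hvA).trans hvolA)
      (not_le.mpr (sphVol_ball_lt hn e a0 (not_le.mp hlt) (by linarith)))
  exact (hvB.trans hvolB).trans (measure_mono (sphBall_mono e (by linarith)))

/-- The isodiametric inequality for closed sets. -/
theorem isodiametric (hn : 1 ≤ n) (e : Sph n) {M : Set (Sph n)} (hM : IsClosed M)
    {D : ℝ} (hD0 : 0 < D) (hD : D < Real.pi) (h : PairLe (Real.cos D) M M) :
    sphVol n M ≤ sphVol n (sphBall e (D / 2)) := by
  rcases le_total (sphVol n (sphBall e (D / 2))) (sphVol n M) with hle | hle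
  · have := pair_isodiametric hn e hM hM (r := D / 2) (by linarith) (by linarith) hD h hle
    rwa [sub_half] at this
  · exact hle

end PairInequality

/-! ### Rigidity of regular extremal sets -/

section Rigidity
variable {n : ℕ}

/-- `L` is closed, has diameter at most `arccos c`, and has the largest volume among such sets. -/
structure IsExtremal (c : ℝ) (L : Set (Sph n)) : Prop where
  isClosed : IsClosed L
  pairLe : PairLe c L L
  maximal : ∀ M : Set (Sph n), IsClosed M → PairLe c M M → sphVol n M ≤ sphVol n L

lemma IsExtremal.pol {c : ℝ} {L : Set (Sph n)} (hL : IsExtremal c L) (u : Esp n) :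
    IsExtremal c (pol u L) where
  isClosed := isClosed_pol u hL.isClosed
  pairLe := hL.pairLe.pol u
  maximal M hM h := by rw [sphVol_pol u hL.isClosed]; exact hL.maximal M hM h

/-- A point of an extremal set without a partner at the maximal distance is an interior point:
otherwise a small ball around it could be added. -/
lemma IsExtremal.mem_interior {c : ℝ} (hc : c < 1) {L : Set (Sph n)} (hL : IsExtremal c L)
    {p : Sph n} (hp : p ∈ L) (h : ∀ q ∈ L, c < ip p q) : p ∈ interior L := by
  obtain ⟨q₀, hq₀, hmin⟩ := hL.isClosed.isCompact.exists_isMinOn ⟨p, hp⟩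
    (f := fun q => ip p q) (by unfold ip; fun_prop)
  set δ := min (ip p q₀ - c) ((1 - c) / 2) with hδ
  have hδ0 : 0 < δ := lt_min (by linarith [h q₀ hq₀]) (by linarith)
  have hδ1 : δ ≤ ip p q₀ - c := min_le_left _ _
  have hδ2 : δ ≤ (1 - c) / 2 := min_le_right _ _
  set B := Metric.closedBall p δ with hB
  have hBL : ∀ x ∈ B, ∀ q ∈ L, c ≤ ip x q := by
    intro x hx q hq
    have h1 : ip p q₀ ≤ ip p q := hmin hq
    have h2 := ip_sub_le_dist p x q
    rw [dist_comm] at h2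
    linarith [Metric.mem_closedBall.mp hx]
  have hM : PairLe c (L ∪ B) (L ∪ B) := by
    rintro x (hx | hx) y (hy | hy)
    · exact hL.pairLe x hx y hy
    · rw [ip_comm]; exact hBL y hy x hx
    · exact hBL x hx y hy
    · have h1 := ip_sub_le_dist p x y
      have h2 := ip_sub_le_dist p y p
      rw [dist_comm] at h1 h2
      rw [ip_self, ip_comm y p] at h2
      linarith [Metric.mem_closedBall.mp hx, Metric.mem_closedBall.mp hy]
  have hvol := hL.maximal _ (hL.isClosed.union Metric.isClosed_closedBall) hM
  have hnull : sphVol n (Metric.ball p δ \ L) = 0 := by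
    have hd : Disjoint L (Metric.ball p δ \ L) := disjoint_sdiff_right
    have h1 : sphVol n L + sphVol n (Metric.ball p δ \ L) ≤ sphVol n L + 0 := by
      rw [← measure_union hd (Metric.isOpen_ball.measurableSet.diff hL.isClosed.measurableSet),
        add_zero]
      refine (measure_mono ?_).trans hvol
      exact union_subset_union_right _ (sdiff_subset.trans Metric.ball_subset_closedBall)
    exact le_antisymm ((ENNReal.add_le_add_iff_left (measure_ne_top _ _)).mp h1) bot_le
  have hempty : Metric.ball p δ \ L = ∅ :=
    (Metric.isOpen_ball.sdiff hL.isClosed).eq_empty_of_measure_zero hnull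
  exact _root_.mem_interior.mpr ⟨Metric.ball p δ, sdiff_eq_empty.mp hempty, Metric.isOpen_ball,
    Metric.mem_ball_self hδ0⟩

/-- An interior point has no partner at the maximal distance, since a geodesic can be extended. -/
lemma cos_lt_of_mem_interior (hn : 1 ≤ n) {D : ℝ} (hD0 : 0 < D) (hD1 : D < Real.pi)
    {L : Set (Sph n)} (hL : PairLe (Real.cos D) L L) {p q : Sph n} (hp : p ∈ interior L)
    (hq : q ∈ L) : Real.cos D < ip p q := by
  refine lt_of_le_of_ne (hL p (interior_subset hp) q hq) fun h => ?_
  have hgd : gd q p = D := by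
    refine Real.injOn_cos ⟨gd_nonneg _ _, gd_le_pi _ _⟩ ⟨hD0.le, hD1.le⟩ ?_
    rw [cos_gd, ip_comm, h]
  obtain ⟨g, g0, g1, gc, gi⟩ := exists_geodesic hn q p
  rw [hgd] at g1
  have h1 : ∀ᶠ t in 𝓝 D, g t ∈ L := by
    have : interior L ∈ 𝓝 (g D) := by rw [g1]; exact isOpen_interior.mem_nhds hp
    filter_upwards [gc.continuousAt.preimage_mem_nhds this] with t ht using interior_subset ht
  have h2 : ∀ᶠ t in 𝓝[>] D, g t ∈ L ∧ t < Real.pi ∧ D < t :=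
    (h1.filter_mono nhdsWithin_le_nhds).and
      (((eventually_lt_nhds hD1).filter_mono nhdsWithin_le_nhds).and
        self_mem_nhdsWithin)
  obtain ⟨t, ht, htpi, hDt⟩ := h2.exists
  have h3 := hL _ ht q hq
  rw [← g0, gi, sub_zero] at h3
  exact absurd h3 (not_le.mpr
    (Real.strictAntiOn_cos ⟨hD0.le, hD1.le⟩ ⟨by linarith, htpi.le⟩ hDt))

lemma isPreconnected_lower (hn : 1 ≤ n) (w : Sph n) (h : ℝ) :
    IsPreconnected {x : Sph n | ip x w < h} := by
  refine isPreconnected_of_forall (-w) fun y hy => ?_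
  obtain ⟨g, g0, g1, gc, gi⟩ := exists_geodesic hn (-w) y
  have h0 := gd_nonneg (-w) y
  refine ⟨g '' Icc 0 (gd (-w) y), ?_, ⟨0, ⟨le_rfl, h0⟩, g0⟩, ⟨_, ⟨h0, le_rfl⟩, g1⟩,
    isPreconnected_Icc.image g gc.continuousOn⟩
  rintro _ ⟨a, ha, rfl⟩
  have h1 : ip (g a) (-w) = Real.cos a := by rw [← g0, gi, sub_zero]
  have h2 : Real.cos (gd (-w) y) ≤ Real.cos a :=
    Real.cos_le_cos_of_nonneg_of_le_pi ha.1 (gd_le_pi _ _) ha.2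
  rw [cos_gd, ip_neg_left, ip_comm] at h2
  rw [ip_neg_right] at h1
  simp only [mem_ofPred_eq] at hy ⊢
  linarith

lemma exists_mem_boundary {T L : Set (Sph n)} (hT : IsPreconnected T) (hL : IsClosed L)
    (h1 : (T ∩ L).Nonempty) (h2 : (T ∩ Lᶜ).Nonempty) : ∃ p ∈ T, p ∈ L ∧ p ∉ interior L := by
  by_contra hcon
  push Not at hcon
  obtain ⟨x, hxT, hxL⟩ := h1
  obtain ⟨y, -, hy1, hy2⟩ := hT (interior L) Lᶜ isOpen_interior hL.isOpen_compl
    (fun z hz => by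
      by_cases hzL : z ∈ L
      · exact Or.inl (hcon z hz hzL)
      · exact Or.inr hzL) ⟨x, hxT, hcon x hxT hxL⟩ h2
  exact hy2 (interior_subset hy1)

/-- Three distinct points of the sphere are not collinear. -/
lemma eq_zero_of_smul_sub_eq {p x y : Sph n} (hxp : x ≠ p) (hyp : y ≠ p) (hxy : x ≠ y) {a b : ℝ}
    (h : a • ((x : Esp n) - p) = b • ((y : Esp n) - p)) : a = 0 := by
  have hX := ip_lt_one hxp
  have hY := ip_lt_one hyp
  have h1 : a * (1 - ip x p) = b * (1 - ip y p) := by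
    have h2 := congrArg (fun v : Esp n => inner ℝ v (p : Esp n)) h
    simp only [inner_smul_left, inner_sub_left] at h2
    have h3 := ip_self p
    unfold ip at h3 ⊢
    simp only [RCLike.conj_to_real] at h2
    rw [h3] at h2
    linarith
  have h2 : a ^ 2 * (1 - ip x p) = b ^ 2 * (1 - ip y p) := by
    have h2 := congrArg (fun v : Esp n => ‖v‖ ^ 2) h
    simp only [norm_smul, mul_pow, Real.norm_eq_abs, sq_abs] at h2
    have e1 := dist_sq_eq x p
    have e2 := dist_sq_eq y p
    rw [Subtype.dist_eq, dist_eq_norm] at e1 e2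
    rw [e1, e2] at h2
    linarith
  have h3 : b * (a - b) * (1 - ip y p) = 0 := by linear_combination h2 - a * h1
  have hY' : 1 - ip y p ≠ 0 := by linarith
  have hX' : 1 - ip x p ≠ 0 := by linarith
  by_contra ha
  rcases mul_eq_zero.mp ((mul_eq_zero.mp h3).resolve_right hY') with hb | hab
  · rw [hb, zero_mul] at h1
    exact ha ((mul_eq_zero.mp h1).resolve_right hX')
  · rw [← sub_eq_zero.mp hab] at h
    exact hxy (Subtype.ext (sub_left_injective (smul_right_injective _ ha h)))

/-- Let `q` be the only possible partner, at maximal distance, of the boundary point `p`, and let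
`x` lie outside `L`. In the polarization towards `p` along the bisector of `p` and `x`, which is
again extremal, `p` is still a boundary point and so has a partner; this can only be `q`, and the
alternative says that `q` survives the polarization. -/
lemma IsExtremal.mirror_partner {c : ℝ} (hc : c < 1) {L : Set (Sph n)} (hL : IsExtremal c L)
    {p q x : Sph n} (hp : p ∈ L) (hp' : p ∉ interior L) (hx : x ∉ L)
    (huniq : ∀ q' ∈ L, ip p q' = c → q' = q) :
    mirror ((p : Esp n) - (x : Esp n)) q ∈ L ∨ 0 ≤ inner ℝ (q : Esp n) ((p : Esp n) - (x : Esp n)) := by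
  set u : Esp n := (p : Esp n) - (x : Esp n) with hu
  have hmp : mirror u p = x := mirror_sub p x
  have hne : p ≠ x := by rintro rfl; exact hx hp
  have hpu : 0 < inner ℝ (p : Esp n) u := by
    rw [hu, inner_sub_right]
    have h1 := ip_self p
    have h2 := ip_lt_one hne
    unfold ip at h1 h2
    linarith
  have hM := hL.pol u
  have hpM : p ∈ _root_.pol u L := Or.inl ⟨Or.inl hp, hpu.le⟩
  -- Near `p` the polarized set coincides with `L`, because the mirror image `x` lies outside `L`.
  have hpM' : p ∉ interior (_root_.pol u L) := by
    intro h
    apply hp'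
    rw [mem_interior_iff_mem_nhds] at h ⊢
    have h2 : mirror u ⁻¹' Lᶜ ∈ 𝓝 p :=
      (mirror u).continuous.continuousAt.preimage_mem_nhds
        (by rw [hmp]; exact hL.isClosed.isOpen_compl.mem_nhds hx)
    filter_upwards [h, h2] with y hy hy2
    rcases hy with ⟨hy | hy, -⟩ | ⟨hy, -⟩
    · exact hy
    · exact absurd hy hy2
    · exact hy
  have hex : ∃ q' ∈ _root_.pol u L, ip p q' ≤ c := by
    by_contra hcon
    push Not at hcon
    exact hpM' (hM.mem_interior hc hpM hcon)
  obtain ⟨q', hq', hle⟩ := hex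
  have heq : ip p q' = c := le_antisymm hle (hM.pairLe p hpM q' hq')
  rcases hq' with ⟨hq' | hq', hpos⟩ | ⟨hq', hm⟩
  · rw [← huniq q' hq' heq]; exact Or.inr hpos
  · have h1 := hL.pairLe p hp _ hq'
    rw [ip_mirror_eq, heq] at h1
    have h2 : 2 * inner ℝ (p : Esp n) u * inner ℝ (q' : Esp n) u / ‖u‖ ^ 2 ≤ 0 := by linarith
    have hu0 : u ≠ 0 := by intro h0; rw [h0, inner_zero_right] at hpu; exact lt_irrefl _ hpu
    have h3 : 2 * inner ℝ (p : Esp n) u * inner ℝ (q' : Esp n) u ≤ 0 := by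
      by_contra hcon
      exact absurd h2 (not_le.mpr (div_pos (not_le.mp hcon) (by positivity)))
    have h4 : inner ℝ (q' : Esp n) u = (0 : ℝ) := by
      have hpos' : (0 : ℝ) ≤ inner ℝ (q' : Esp n) u := hpos
      nlinarith
    have hq'' : q' ∈ L := by
      have := mirror_eq_self h4
      rwa [mem_preimage, this] at hq'
    rw [← huniq q' hq'' heq]; exact Or.inr hpos
  · rw [← huniq q' hq' heq]; exact Or.inl hm

/-- The reflection exchanging two boundary points `p` and `x` maps the partner `q` of `p` into `L`,
hence, being an isometry, to a partner of `x`. This is the limit of `mirror_partner` over points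
outside `L` that converge to `x`. -/
lemma IsExtremal.mirror_partner_mem {c : ℝ} (hc : c < 1) {L : Set (Sph n)} (hL : IsExtremal c L)
    {p q x : Sph n} (hp : p ∈ L) (hp' : p ∉ interior L) (hx : x ∈ L) (hx' : x ∉ interior L)
    (hpx : p ≠ x) (hq : q ∈ L) (hpq : ip p q = c) (huniq : ∀ q' ∈ L, ip p q' = c → q' = q) :
    mirror ((p : Esp n) - (x : Esp n)) q ∈ L := by
  by_contra hcon
  have hnn : inner ℝ (q : Esp n) ((p : Esp n) - (x : Esp n)) < 0 := by
    by_contra hnn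
    have h1 := hL.pairLe x hx q hq
    rw [inner_sub_right, real_inner_comm (p : Esp n), real_inner_comm (x : Esp n)] at hnn
    unfold ip at hpq h1
    have h0 : inner ℝ (q : Esp n) ((p : Esp n) - (x : Esp n)) = (0 : ℝ) := by
      rw [inner_sub_right, real_inner_comm (p : Esp n), real_inner_comm (x : Esp n)]
      linarith
    rw [mirror_eq_self h0] at hcon
    exact hcon hq
  have hcont : ContinuousAt (fun y : Sph n => mirror ((p : Esp n) - (y : Esp n)) q) x := by
    have hne : ‖(p : Esp n) - (x : Esp n)‖ ^ 2 ≠ 0 :=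
      pow_ne_zero 2 (norm_ne_zero_iff.mpr (sub_ne_zero.mpr fun h => hpx (Subtype.ext h)))
    rw [Topology.IsInducing.subtypeVal.continuousAt_iff]
    simp only [Function.comp_def, coe_mirror]
    fun_prop (disch := exact hne)
  have hev : ∀ᶠ y : Sph n in 𝓝 x, mirror ((p : Esp n) - (y : Esp n)) q ∉ L ∧
      inner ℝ (q : Esp n) ((p : Esp n) - (y : Esp n)) < 0 := by
    refine (hcont.eventually (hL.isClosed.isOpen_compl.mem_nhds hcon)).and ?_
    have ho : IsOpen {y : Sph n | inner ℝ (q : Esp n) ((p : Esp n) - (y : Esp n)) < 0} :=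
      isOpen_lt (by fun_prop) continuous_const
    exact ho.mem_nhds hnn
  have hcl : x ∈ closure Lᶜ := by rw [closure_compl]; exact hx'
  obtain ⟨y, ⟨hy1, hy2⟩, hy3⟩ := mem_closure_iff_nhds.mp hcl _ hev
  rcases hL.mirror_partner hc hp hp' hy3 huniq with h | h
  · exact hy1 h
  · exact absurd h (not_le.mpr hy2)

/-- An extremal set each of whose boundary points has at most one partner at maximal distance is
contained in a ball of half the diameter. -/
theorem IsExtremal.subset_ball (hn : 1 ≤ n) {D : ℝ} (hD0 : 0 < D) (hD1 : D < Real.pi)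
    {L : Set (Sph n)} (hL : IsExtremal (Real.cos D) L)
    (huniq : ∀ p ∈ L, p ∉ interior L → ∀ q ∈ L, ∀ q' ∈ L,
      ip p q = Real.cos D → ip p q' = Real.cos D → q = q') :
    ∃ w : Sph n, L ⊆ sphBall w (D / 2) := by
  set c := Real.cos D with hcD
  have hc1 : c < 1 := by
    have := Real.strictAntiOn_cos ⟨le_rfl, Real.pi_pos.le⟩ ⟨hD0.le, hD1.le⟩ hD0
    rwa [Real.cos_zero] at this
  have hcm : -1 < c := by
    have := Real.strictAntiOn_cos ⟨hD0.le, hD1.le⟩ ⟨Real.pi_pos.le, le_rfl⟩ hD1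
    rwa [Real.cos_pi] at this
  rcases L.eq_empty_or_nonempty with hempty | ⟨a, ha⟩
  · exact ⟨northPole n, by simp [hempty]⟩
  -- Existence of a boundary point: otherwise `L` would be the whole sphere.
  have hbd : ∃ p ∈ L, p ∉ interior L := by
    have ha' : -a ∉ L := fun h => by
      have := hL.pairLe a ha _ h
      rw [ip_neg_right, ip_self] at this
      linarith
    have huniv := isPreconnected_lower hn a 2
    obtain ⟨p, -, hp⟩ := exists_mem_boundary huniv hL.isClosed
      ⟨a, by rw [mem_ofPred_eq, ip_self]; norm_num, ha⟩
      ⟨-a, by rw [mem_ofPred_eq, ip_neg_left, ip_self]; norm_num, ha'⟩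
    exact ⟨p, hp⟩
  have hpart : ∀ p ∈ L, p ∉ interior L → ∃ q ∈ L, q ∉ interior L ∧ ip p q = c := by
    intro p hp hp'
    have hex : ∃ q ∈ L, ip p q ≤ c := by
      by_contra hcon
      push Not at hcon
      exact hp' (hL.mem_interior hc1 hp hcon)
    obtain ⟨q, hq, hle⟩ := hex
    have heq := le_antisymm hle (hL.pairLe p hp q hq)
    refine ⟨q, hq, fun hq' => ?_, heq⟩
    have := cos_lt_of_mem_interior hn hD0 hD1 hL.pairLe hq' hp
    rw [ip_comm, heq] at this
    exact lt_irrefl _ this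
  obtain ⟨p, hp, hp'⟩ := hbd
  obtain ⟨q, hq, hq', hpq⟩ := hpart p hp hp'
  have hpq' : p ≠ q := by rintro rfl; rw [ip_self] at hpq; linarith
  -- Let `r` be the partner of `y`. Both the reflection exchanging `p` and `y` (applied to `q`) and
  -- the one exchanging `q` and `y` (applied to `p`) yield `r`; comparing them gives
  -- `r = p + q - y`, so the boundary lies in a hyperplane orthogonal to `p + q`.
  have hform : ∀ y ∈ L, y ∉ interior L → inner ℝ (y : Esp n) ((p : Esp n) + (q : Esp n)) = 1 + c := by
    intro y hy hy'
    by_cases hyp : y = p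
    · have h1 := ip_self p
      unfold ip at h1 hpq
      rw [hyp, inner_add_right, h1, hpq]
    by_cases hyq : y = q
    · have h1 := ip_self q
      rw [ip_comm] at hpq
      unfold ip at h1 hpq
      rw [hyq, inner_add_right, h1, hpq, add_comm]
    obtain ⟨r, hr, hr', hyr⟩ := hpart y hy hy'
    have hup : ∀ q₁ ∈ L, ip p q₁ = c → q₁ = q := fun q₁ h1 h2 => huniq p hp hp' q₁ h1 q hq h2 hpq
    have huq : ∀ q₁ ∈ L, ip q q₁ = c → q₁ = p := fun q₁ h1 h2 =>
      huniq q hq hq' q₁ h1 p hp h2 (by rw [ip_comm, hpq])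
    have e1 : mirror ((p : Esp n) - (y : Esp n)) q = r := by
      refine huniq y hy hy' _ (hL.mirror_partner_mem hc1 hp hp' hy hy' (Ne.symm hyp) hq hpq hup)
        r hr ?_ hyr
      rw [← ip_mirror_left, mirror_sub', hpq]
    have e2 : mirror ((q : Esp n) - (y : Esp n)) p = r := by
      refine huniq y hy hy' _ (hL.mirror_partner_mem hc1 hq hq' hy hy' (Ne.symm hyq) hp
        (by rw [ip_comm, hpq]) huq) r hr ?_ hyr
      rw [← ip_mirror_left, mirror_sub', ip_comm, hpq]
    have c1 := congrArg (fun z : Sph n => (z : Esp n)) e1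
    have c2 := congrArg (fun z : Sph n => (z : Esp n)) e2
    simp only [coe_mirror] at c1 c2
    set α := 2 * inner ℝ (q : Esp n) ((p : Esp n) - (y : Esp n)) / ‖(p : Esp n) - (y : Esp n)‖ ^ 2
    set β := 2 * inner ℝ (p : Esp n) ((q : Esp n) - (y : Esp n)) / ‖(q : Esp n) - (y : Esp n)‖ ^ 2
    have hlin : (1 + α) • ((p : Esp n) - y) = (1 + β) • ((q : Esp n) - y) := by
      have h3 : (q : Esp n) - α • ((p : Esp n) - y) = p - β • ((q : Esp n) - y) := c1.trans c2.symm
      have h4 : (1 + α) • ((p : Esp n) - y) - (1 + β) • ((q : Esp n) - y) =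
          -(((q : Esp n) - α • ((p : Esp n) - y)) - (p - β • ((q : Esp n) - y))) := by module
      exact sub_eq_zero.mp (h4.trans (neg_eq_zero.mpr (sub_eq_zero.mpr h3)))
    have hα : α = -1 := by
      linarith [eq_zero_of_smul_sub_eq (Ne.symm hyp) (Ne.symm hyq) hpq' hlin]
    have hsum : (p : Esp n) + q = r + y := by
      rw [← c1, hα, neg_one_smul]; abel
    have h1 := ip_self y
    unfold ip at h1 hyr
    rw [hsum, inner_add_right, h1, hyr, add_comm]
  set v : Esp n := (p : Esp n) + (q : Esp n) with hv
  have hvn : ‖v‖ ^ 2 = 2 + 2 * c := by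
    unfold ip at hpq
    rw [hv, norm_add_sq_real, sph_norm, sph_norm, hpq]; ring
  have hcos : c = 2 * Real.cos (D / 2) ^ 2 - 1 := by
    rw [hcD, ← Real.cos_two_mul]; ring_nf
  have hcospos : 0 < Real.cos (D / 2) :=
    Real.cos_pos_of_mem_Ioo ⟨by linarith [Real.pi_pos], by linarith⟩
  have hvn' : ‖v‖ = 2 * Real.cos (D / 2) := by
    rw [← sq_eq_sq₀ (norm_nonneg _) (by positivity), hvn, hcos]; ring
  have hvpos : 0 < ‖v‖ := by rw [hvn']; positivity
  let w : Sph n := ⟨‖v‖⁻¹ • v, by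
    rw [mem_sphere_zero_iff_norm, norm_smul, norm_inv, norm_norm, inv_mul_cancel₀ hvpos.ne']⟩
  have hwbd : ∀ y ∈ L, y ∉ interior L → ip y w = Real.cos (D / 2) := by
    intro y hy hy'
    have h1 := hform y hy hy'
    change inner ℝ (y : Esp n) (‖v‖⁻¹ • v) = _
    rw [inner_smul_right, h1, hvn', hcos]
    field_simp; ring
  refine ⟨w, fun x hx => ?_⟩
  rw [mem_sphBall_iff (by linarith) (by linarith [Real.pi_pos])]
  by_contra hlt
  -- Otherwise the whole complementary cap lies in `L`, and it contains antipodal points.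
  have hcap : ∀ y : Sph n, ip y w < Real.cos (D / 2) → y ∈ L := by
    intro y hy
    by_contra hyL
    obtain ⟨b, hb1, hb2⟩ := exists_mem_boundary (isPreconnected_lower hn w (Real.cos (D / 2)))
      hL.isClosed ⟨x, not_le.mp hlt, hx⟩ ⟨y, hy, hyL⟩
    exact absurd (hwbd b hb2.1 hb2.2) (ne_of_lt hb1)
  obtain ⟨t, ht, hwt⟩ := exists_unit_orthogonal hn (w : Esp n)
  let t' : Sph n := ⟨t, by rw [mem_sphere_zero_iff_norm, ht]⟩
  have ht' : ip t' w = 0 := by rw [ip_comm]; exact hwt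
  have h1 := hL.pairLe t' (hcap t' (by rw [ht']; exact hcospos)) (-t')
    (hcap (-t') (by rw [ip_neg_left, ht', neg_zero]; exact hcospos))
  rw [ip_neg_right, ip_self] at h1
  linarith

end Rigidity

/-! ### Parallel sets and the equality case -/

section Equality
variable {n : ℕ}

lemma continuous_gd_left (e : Sph n) : Continuous fun x : Sph n => gd x e :=
  Real.continuous_arccos.comp (continuous_ip_right e)

/-- The closed outer parallel set of `K` at geodesic distance `s`. -/
def parallel (K : Set (Sph n)) (s : ℝ) : Set (Sph n) := {y | ∃ x ∈ K, gd x y ≤ s}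

lemma isClosed_parallel {K : Set (Sph n)} (hK : IsClosed K) (s : ℝ) :
    IsClosed (parallel K s) := by
  have hc : Continuous fun p : Sph n × Sph n => gd p.1 p.2 :=
    Real.continuous_arccos.comp continuous_ip
  have h : IsClosed {p : Sph n × Sph n | p.1 ∈ K ∧ gd p.1 p.2 ≤ s} :=
    (hK.preimage continuous_fst).inter (isClosed_le hc continuous_const)
  have h2 : parallel K s = Prod.snd '' {p : Sph n × Sph n | p.1 ∈ K ∧ gd p.1 p.2 ≤ s} := by
    ext y
    constructor
    · rintro ⟨x, hx, hxy⟩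
      exact ⟨(x, y), ⟨hx, hxy⟩, rfl⟩
    · rintro ⟨⟨x, y'⟩, ⟨hx, hxy⟩, rfl⟩
      exact ⟨x, hx, hxy⟩
  rw [h2]
  exact (h.isCompact.image continuous_snd).isClosed

lemma exists_null_level (e : Sph n) {a b : ℝ} (hab : a < b) :
    ∃ t ∈ Ioo a b, sphVol n {x | gd x e = t} = 0 := by
  by_contra hcon
  push Not at hcon
  have hcount := Measure.countable_meas_level_set_pos (μ := sphVol n)
    (continuous_gd_left e).measurable
  have hsub : Ioo a b ⊆ {t : ℝ | 0 < sphVol n {x : Sph n | gd x e = t}} :=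
    fun t ht => pos_iff_ne_zero.mpr (hcon t ht)
  have := (hcount.mono hsub).measure_zero volume
  rw [Real.volume_Ioo, ENNReal.ofReal_eq_zero] at this
  linarith

/-- Brunn–Minkowski type lower bound for a parallel set. The antipode of the complement of
`parallel K s` has distance at most `π - s` from `K`, so `pair_isodiametric` bounds its volume. -/
lemma ball_le_parallel (hn : 1 ≤ n) (e : Sph n) {K : Set (Sph n)} (hK : IsClosed K) {r s : ℝ}
    (hr : 0 < r) (hs : 0 < s) (hrs : r + s < Real.pi)
    (hvol : sphVol n (sphBall e r) ≤ sphVol n K)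
    (hnull : sphVol n {x | gd x e = r + s} = 0) :
    sphVol n (sphBall e (r + s)) ≤ sphVol n (parallel K s) := by
  set N : Set (Sph n) := {y | ∀ x ∈ K, gd y x ≤ Real.pi - s} with hN
  have hNc : IsClosed N := by
    have : N = ⋂ x ∈ K, {y | gd y x ≤ Real.pi - s} := by ext; simp [hN]
    rw [this]
    exact isClosed_biInter fun x _ => isClosed_le (continuous_gd_left x) continuous_const
  have hP : PairLe (Real.cos (Real.pi - s)) K N := by
    intro x hx y hy
    have h := hy x hx
    rw [gd_comm] at h
    exact (gd_le_iff (by linarith) (by linarith)).mp h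
  have h1 := pair_isodiametric hn e hK hNc hr (by linarith) (by linarith) hP hvol
  have h2 : sphVol n (parallel K s)ᶜ ≤ sphVol n N := by
    rw [← sphVol_neg_preimage N]
    refine measure_mono fun y hy x hx => ?_
    have h3 : s < gd x y := by
      by_contra hlt
      exact hy ⟨x, hx, not_lt.mp hlt⟩
    rw [gd_comm, gd_neg_right]
    linarith
  have h3 : sphVol n (sphBall e (Real.pi - s - r)) ≤ sphVol n (sphBall e (r + s))ᶜ := by
    rw [← sphVol_neg_preimage]
    calc _ ≤ sphVol n ((sphBall e (r + s))ᶜ ∪ {x | gd x e = r + s}) := by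
          refine measure_mono fun y hy => ?_
          have h4 : gd (-y) e ≤ Real.pi - s - r := hy
          rw [gd_comm, gd_neg_right, gd_comm] at h4
          have h5 : r + s ≤ gd y e := by linarith
          rcases h5.eq_or_lt with h5 | h5
          · exact Or.inr h5.symm
          · exact Or.inl fun h6 => absurd h5 (not_lt.mpr h6)
      _ ≤ _ := measure_union_le _ _
      _ = _ := by rw [hnull, add_zero]
  have h4 := (h2.trans h1).trans h3
  have h5 := measure_add_measure_compl (μ := sphVol n) (isClosed_sphBall e (r + s)).measurableSet
  have h6 := measure_add_measure_compl (μ := sphVol n) (isClosed_parallel hK s).measurableSet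
  have h7 : sphVol n (sphBall e (r + s)) + sphVol n (sphBall e (r + s))ᶜ ≤
      sphVol n (parallel K s) + sphVol n (sphBall e (r + s))ᶜ := by
    rw [h5, ← h6]
    gcongr
  exact (ENNReal.add_le_add_iff_right (measure_ne_top _ _)).mp h7

lemma gd_parallel_le {K : Set (Sph n)} {D s : ℝ} (hK : ∀ x ∈ K, ∀ y ∈ K, gd x y ≤ D)
    {x y : Sph n} (hx : x ∈ K) (hy : y ∈ parallel K s) : gd x y ≤ D + s := by
  obtain ⟨b, hb, hby⟩ := hy
  linarith [gd_triangle x b y, hK x hx b hb]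

lemma ip_eq_cos_iff {x y : Sph n} {r : ℝ} (h0 : 0 ≤ r) (h1 : r ≤ Real.pi) :
    ip x y = Real.cos r ↔ gd x y = r := by
  rw [← cos_gd]
  exact Real.injOn_cos.eq_iff ⟨gd_nonneg x y, gd_le_pi x y⟩ ⟨h0, h1⟩

/-- In a parallel set, diametral partners are unique: a diametral segment from `p` has to pass
through any point of `K` at distance at most `s` from `p`, which fixes its direction. -/
lemma partner_unique (hn : 1 ≤ n) {K : Set (Sph n)} {D s : ℝ} (hD : 0 < D) (hs : 0 < s)
    (hDs : D + 2 * s < Real.pi) (hK : ∀ x ∈ K, ∀ y ∈ K, gd x y ≤ D)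
    {p q q' : Sph n} (hp : p ∈ parallel K s) (hq : q ∈ parallel K s) (hq' : q' ∈ parallel K s)
    (h : ip p q = Real.cos (D + 2 * s)) (h' : ip p q' = Real.cos (D + 2 * s)) : q = q' := by
  obtain ⟨a, ha, hap⟩ := hp
  have h1 := (ip_eq_cos_iff (by linarith) hDs.le).mp h
  have h1' := (ip_eq_cos_iff (by linarith) hDs.le).mp h'
  have h2 := gd_parallel_le hK ha hq
  have h2' := gd_parallel_le hK ha hq'
  have h3 := gd_triangle p a q
  have h3' := gd_triangle p a q'
  rw [gd_comm] at hap
  refine unique_of_triangle_eq hn hs (by linarith) (x := p) (a := a) (by linarith) h ?_ h' ?_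
  · exact (ip_eq_cos_iff (by linarith) (by linarith)).mpr (by linarith)
  · exact (ip_eq_cos_iff (by linarith) (by linarith)).mpr (by linarith)

/-- If the parallel set of `K` lies in a ball, then `K` lies in the ball with radius
reduced by `s`. -/
lemma subset_ball_of_parallel (hn : 1 ≤ n) {K : Set (Sph n)} {r s : ℝ} (hr : 0 < r) (hs : 0 < s)
    (hrs : r + s < Real.pi) {w : Sph n} (h : parallel K s ⊆ sphBall w (r + s)) :
    K ⊆ sphBall w r := by
  intro x hx
  by_contra hlt
  replace hlt : r < gd x w := not_le.mp hlt
  rw [gd_comm] at hlt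
  obtain ⟨g, g0, g1, -, gi⟩ := exists_geodesic hn w x
  -- the geodesic from `w` through `x` is prolonged by `s`, but not beyond the antipode of `w`
  set t := min (gd w x + s) Real.pi with ht
  have ht1 : gd w x ≤ t := le_min (by linarith) (gd_le_pi _ _)
  have ht2 : t ≤ gd w x + s := min_le_left _ _
  have ht3 : t ≤ Real.pi := min_le_right _ _
  have ht4 : r + s < t := lt_min (by linarith) hrs
  have hm : g t ∈ parallel K s := by
    refine ⟨x, hx, ?_⟩
    rw [gd_le_iff hs.le (by linarith)]
    nth_rewrite 1 [← g1]
    rw [gi, ← Real.cos_neg (gd w x - t)]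
    exact Real.cos_le_cos_of_nonneg_of_le_pi (by linarith) (by linarith) (by linarith)
  have h2 := h hm
  rw [mem_sphBall_iff (by linarith) hrs.le, ← g0, gi, sub_zero] at h2
  exact absurd h2 (not_le.mpr
    (Real.strictAntiOn_cos ⟨by linarith, by linarith⟩ ⟨by linarith, ht3⟩ ht4))

/-- A closed subset of a ball with the full volume of the ball is the whole ball. -/
lemma eq_ball_of_volume (hn : 1 ≤ n) {K : Set (Sph n)} (hK : IsClosed K) {w : Sph n} {r : ℝ}
    (hr : 0 < r) (hr1 : r < Real.pi) (hsub : K ⊆ sphBall w r)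
    (hvol : sphVol n (sphBall w r) ≤ sphVol n K) : K = sphBall w r := by
  have ho : IsOpen ({x : Sph n | Real.cos r < ip x w} \ K) :=
    (isOpen_lt continuous_const (continuous_ip_right w)).sdiff hK
  have hemp : {x : Sph n | Real.cos r < ip x w} \ K = ∅ := by
    rw [← ho.measure_eq_zero_iff (sphVol n)]
    refine measure_mono_null (t := sphBall w r \ K) (fun x hx => ⟨?_, hx.2⟩) ?_
    · rw [mem_sphBall_iff hr.le hr1.le]; exact hx.1.le
    · rw [measure_sdiff hsub hK.measurableSet.nullMeasurableSet (measure_ne_top _ _)]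
      exact tsub_eq_zero_of_le hvol
  have hin : {x : Sph n | Real.cos r < ip x w} ⊆ K := sdiff_eq_bot_iff.mp hemp
  refine hsub.antisymm fun y hy => ?_
  have hy' : gd w y ≤ r := by rw [gd_comm]; exact hy
  obtain ⟨g, g0, g1, gc, gi⟩ := exists_geodesic hn w y
  have hball : ∀ a, 0 ≤ a → a < r → g a ∈ K := by
    intro a ha har
    refine hin ?_
    change Real.cos r < ip (g a) w
    rw [← g0, gi, sub_zero]
    exact Real.strictAntiOn_cos ⟨ha, by linarith⟩ ⟨hr.le, hr1.le⟩ har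
  have hcl' : y ∈ closure (g '' Ico 0 r) := by
    rw [← g1]
    refine image_closure_subset_closure_image gc (mem_image_of_mem g ?_)
    rw [closure_Ico hr.ne]
    exact ⟨gd_nonneg _ _, hy'⟩
  refine closure_minimal ?_ hK hcl'
  rintro _ ⟨a, ha, rfl⟩
  exact hball a ha.1 ha.2

lemma gd_le_of_sphDiam {X : Set (Sph n)} {D : ℝ} (h : sphDiam X ≤ D) {x y : Sph n} (hx : x ∈ X)
    (hy : y ∈ X) : gd x y ≤ D := by
  have hb : BddAbove {r | ∃ x ∈ X, ∃ y ∈ X, r = gd x y} := by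
    refine ⟨Real.pi, ?_⟩
    rintro _ ⟨a, -, b, -, rfl⟩
    exact gd_le_pi a b
  exact (le_csSup hb ⟨x, hx, y, hy, rfl⟩).trans h

lemma gd_le_closure {X : Set (Sph n)} {D : ℝ} (h : ∀ x ∈ X, ∀ y ∈ X, gd x y ≤ D) :
    ∀ x ∈ closure X, ∀ y ∈ closure X, gd x y ≤ D := by
  have hc : Continuous fun p : Sph n × Sph n => gd p.1 p.2 :=
    Real.continuous_arccos.comp continuous_ip
  intro x hx y hy
  have hxy : gd x y ∈ closure (Iic D) := map_mem_closure₂ hc hx hy h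
  rwa [closure_Iic, mem_Iic] at hxy

end Equality

/-- equality case of the spherical isodiametric inequality. -/
theorem spherical_isodiametric_equality (n : ℕ) (hn : 2 ≤ n) (D : ℝ) (hD0 : 0 < D)
    (hD1 : D < Real.pi) (z : Sph n) (X : Set (Sph n)) (hX : MeasurableSet X)
    (hdiam : sphDiam X ≤ D)
    (hvol : sphVol n X = sphVol n (sphBall z (D / 2))) :
    ∃ w : Sph n, closure X = sphBall w (D / 2) := by
  have hn1 : 1 ≤ n := by omega
  set K := closure X with hKdef
  have hK : IsClosed K := isClosed_closure
  have hKd : ∀ x ∈ K, ∀ y ∈ K, gd x y ≤ D :=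
    gd_le_closure fun x hx y hy => gd_le_of_sphDiam hdiam hx hy
  have hKv : sphVol n (sphBall z (D / 2)) ≤ sphVol n K :=
    hvol.symm.le.trans (measure_mono subset_closure)
  obtain ⟨t, ⟨ht1, ht2⟩, hnull⟩ := exists_null_level z (a := D / 2) (b := Real.pi / 2)
    (by linarith)
  obtain ⟨s, rfl⟩ : ∃ s, t = D / 2 + s := ⟨t - D / 2, by ring⟩
  have hs : 0 < s := by linarith
  have hhalf : (D + 2 * s) / 2 = D / 2 + s := by ring
  have hLv := ball_le_parallel hn1 z hK (by linarith) hs (by linarith [Real.pi_pos]) hKv hnull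
  have hext : IsExtremal (Real.cos (D + 2 * s)) (parallel K s) := by
    refine ⟨isClosed_parallel hK s, ?_, fun M hM hMp => ?_⟩
    · rintro x ⟨a, ha, hax⟩ y hy
      rw [← gd_le_iff (by linarith) (by linarith)]
      rw [gd_comm] at hax
      linarith [gd_triangle x a y, gd_parallel_le hKd ha hy]
    · have h := isodiametric hn1 z hM (by linarith) (by linarith) hMp
      rw [hhalf] at h
      exact h.trans hLv
  obtain ⟨w, hw⟩ := hext.subset_ball hn1 (by linarith) (by linarith)
    fun p hp _ q hq q' hq' h h' =>
      partner_unique hn1 hD0 hs (by linarith) hKd hp hq hq' h h'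
  rw [hhalf] at hw
  refine ⟨w, eq_ball_of_volume hn1 hK (by linarith) (by linarith)
    (subset_ball_of_parallel hn1 (by linarith) hs (by linarith [Real.pi_pos]) hw) ?_⟩
  rw [sphVol_ball_eq w z]
  exact hKv
end
end

section
/- Let n ≥ 2 and D > 0. If X ⊆ 𝔹^n is a Borel measurable set with hyperbolic diameter diam_H X ≤ D, then μ_H(X) ≤ μ_H({x ∈ ℝ^n : ‖x‖ ≤ tanh(D/2)}); here {x : ‖x‖ ≤ tanh(D/2)} is the hyperbolic closed ball of radius D/2 centered at the origin. -/
/-!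
The proof is Steiner symmetrization adapted to hyperbolic space. On the hyperboloid
`x₀² - |x|² = 1`, with spatial coordinates `x ∈ ℝ^n`, the volume is `dx / x₀` and
`cosh d(x, y) = x₀ y₀ - ⟨x, y⟩`. For each coordinate `i`, put `ρ = √(1 + ∑_{j ≠ i} x_j²)` and
`x₀ = ρ cosh t`, `x_i = ρ sinh t`; the lines on which only `t` varies are the orbits of the
translations along the `i`-th axis. In the coordinates `(t, (x_j)_{j ≠ i})` the volume is Lebesgue
measure, and `cosh d = ρ ρ' cosh (t - t') - ∑_{j ≠ i} x_j x'_j` increases with `|t - t'|`.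

Replacing each slice along these orbits by a centred interval of the same length therefore preserves
the volume (`hyperboloidVol_symmetrize`), and it does not increase the diameter
(`lorentz_symmetrize_le`), since centred intervals minimize the largest distance between points of two
sets of given lengths (`exists_abs_sub_le`). The new set is invariant under `x_i ↦ -x_i` and keeps the
reflection symmetries already present in the other coordinates, so symmetrizing along all `n` axes
yields a set invariant under `x ↦ -x`. For such a set `2 d(x, 0) = d(x, -x) ≤ D`, so it lies in the
ball of radius `D / 2` (`hyperboloidVol_le`).

The central projection `klein` has Jacobian `x₀ ^ (-(n + 2))`, which carries the volume, the distance
and the ball to those of the Klein model (`hypVol_eq`, `hypDist_klein_le`, `norm_klein_le_tanh`).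
-/

open MeasureTheory

noncomputable section

/-- Euclidean space `ℝ^n`. -/
abbrev Fsp (n : ℕ) : Type := EuclideanSpace ℝ (Fin n)

/-- The inverse hyperbolic cosine `arcosh x = log (x + √(x² − 1))`. -/
def arcosh (x : ℝ) : ℝ := Real.log (x + Real.sqrt (x ^ 2 - 1))

/-- Hyperbolic distance in the Klein model on the open unit ball of `ℝ^n`:
`d_H(x,y) = arcosh ((1 − ⟨x,y⟩)/√((1 − ‖x‖²)(1 − ‖y‖²)))`. -/
def hypDist {n : ℕ} (x y : Fsp n) : ℝ :=
  arcosh ((1 - inner (𝕜 := ℝ) x y) / Real.sqrt ((1 - ‖x‖ ^ 2) * (1 - ‖y‖ ^ 2)))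

/-- Hyperbolic volume in the Klein model: density `(1 − ‖x‖²)^{−(n+1)/2}`
with respect to Lebesgue measure. -/
def hypVol (n : ℕ) : Measure (Fsp n) :=
  (volume : Measure (Fsp n)).withDensity fun x =>
    ENNReal.ofReal ((1 - ‖x‖ ^ 2) ^ (-(((n : ℝ) + 1) / 2)))

section Helpers

open Real Set

variable {n : ℕ}

/-- The height `x₀ = √(1 + |x|²)` of the point `(x₀, x)` of the hyperboloid `x₀² - |x|² = 1`, `x₀ > 0`.
Points of the hyperboloid are represented by their spatial part `x : Fin n → ℝ` throughout. -/
def height (x : Fin n → ℝ) : ℝ := √(1 + ∑ j, x j ^ 2)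

/-- Minus the Lorentz product of two points of the hyperboloid, that is, the hyperbolic cosine of their
hyperbolic distance. -/
def lorentz (x y : Fin n → ℝ) : ℝ := height x * height y - ∑ j, x j * y j

/-- The hyperbolic volume `∫_X dx / x₀`, in the spatial coordinates of the hyperboloid. -/
def hyperboloidVol (X : Set (Fin n → ℝ)) : ENNReal :=
  ∫⁻ x, X.indicator (fun x => ENNReal.ofReal (height x)⁻¹) x

/-- The quantity `ρ = √(1 + ∑_{j ≠ i} x_j²)`, which is constant along the orbits of the translations
along the `i`-th axis. -/
def axisRadius (i : Fin n) (x : Fin n → ℝ) : ℝ := height (Function.update x i 0)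

/-- The orbit of `x` under the translations along the `i`-th axis, parametrized by
`x₀ = ρ cosh t`, `x_i = ρ sinh t`, the other coordinates being fixed. -/
def orbit (i : Fin n) (x : Fin n → ℝ) (t : ℝ) : Fin n → ℝ :=
  Function.update x i (axisRadius i x * sinh t)

/-- The parameters `t` at which the orbit of `x` along the `i`-th axis meets `X`. -/
def orbitSlice (X : Set (Fin n → ℝ)) (i : Fin n) (x : Fin n → ℝ) : Set ℝ :=
  {t | orbit i x t ∈ X}

/-- The parameter of `x` on its own orbit along the `i`-th axis. -/
def axisCoord (i : Fin n) (x : Fin n → ℝ) : ℝ := arsinh (x i / axisRadius i x)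

/-- Hyperbolic Steiner symmetrization along the `i`-th axis: the intersection of `X` with each orbit is
replaced by the interval of the same length centred at `t = 0`. The interval is open, so that orbits
missing `X` remain empty and the result is measurable. -/
def symmetrize (i : Fin n) (X : Set (Fin n → ℝ)) : Set (Fin n → ℝ) :=
  {x | ENNReal.ofReal (2 * |axisCoord i x|) < volume (orbitSlice X i x)}

/-- The reflection `x_i ↦ -x_i`. -/
def reflect (i : Fin n) (x : Fin n → ℝ) : Fin n → ℝ := Function.update x i (-x i)

/-! ### Coordinates along the translation orbits -/

lemma height_sq (x : Fin n → ℝ) : height x ^ 2 = 1 + ∑ j, x j ^ 2 :=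
  sq_sqrt (by positivity)

lemma height_pos (x : Fin n → ℝ) : 0 < height x := by
  unfold height; positivity

lemma height_nonneg (x : Fin n → ℝ) : 0 ≤ height x := (height_pos x).le

lemma axisRadius_pos (i : Fin n) (x : Fin n → ℝ) : 0 < axisRadius i x := height_pos _

lemma measurable_height : Measurable (height : (Fin n → ℝ) → ℝ) := by
  unfold height; fun_prop

lemma measurable_axisRadius (i : Fin n) : Measurable (axisRadius i) :=
  measurable_height.comp (by fun_prop)

lemma measurable_axisCoord (i : Fin n) : Measurable (axisCoord i) := by
  unfold axisCoord
  exact continuous_arsinh.measurable.comp ((measurable_pi_apply i).div (measurable_axisRadius i))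

lemma sum_update_sq (i : Fin n) (x : Fin n → ℝ) (s : ℝ) :
    ∑ j, Function.update x i s j ^ 2 = s ^ 2 + ∑ j ∈ Finset.univ.erase i, x j ^ 2 := by
  rw [← Finset.add_sum_erase _ _ (Finset.mem_univ i)]
  congr 1
  · simp
  · refine Finset.sum_congr rfl fun j hj => ?_
    rw [Function.update_of_ne (Finset.ne_of_mem_erase hj)]

lemma height_update (i : Fin n) (x : Fin n → ℝ) (s : ℝ) :
    height (Function.update x i s) = √(axisRadius i x ^ 2 + s ^ 2) := by
  rw [axisRadius, height_sq, sum_update_sq, height, sum_update_sq]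
  congr 1; ring

@[simp] lemma axisRadius_update (i : Fin n) (x : Fin n → ℝ) (s : ℝ) :
    axisRadius i (Function.update x i s) = axisRadius i x := by
  simp [axisRadius]

lemma height_orbit (i : Fin n) (x : Fin n → ℝ) (t : ℝ) :
    height (orbit i x t) = axisRadius i x * cosh t := by
  have := axisRadius_pos i x
  rw [orbit, height_update, ← sqrt_sq (mul_pos this (cosh_pos t)).le, mul_pow, mul_pow, cosh_sq]
  congr 1; ring

@[simp] lemma orbit_update (i : Fin n) (x : Fin n → ℝ) (s t : ℝ) :
    orbit i (Function.update x i s) t = orbit i x t := by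
  simp [orbit]

@[simp] lemma orbitSlice_update (X : Set (Fin n → ℝ)) (i : Fin n) (x : Fin n → ℝ) (s : ℝ) :
    orbitSlice X i (Function.update x i s) = orbitSlice X i x := by
  simp [orbitSlice]

lemma axisCoord_orbit (i : Fin n) (x : Fin n → ℝ) (t : ℝ) : axisCoord i (orbit i x t) = t := by
  have := axisRadius_pos i x
  rw [axisCoord, orbit, axisRadius_update, Function.update_self, mul_div_cancel_left₀ _ this.ne',
    arsinh_sinh]

lemma orbit_axisCoord (i : Fin n) (x : Fin n → ℝ) : orbit i x (axisCoord i x) = x := by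
  have := axisRadius_pos i x
  rw [axisCoord, orbit, sinh_arsinh, mul_div_cancel₀ _ this.ne', Function.update_eq_self]

/-- On two fixed orbits, the distance is an increasing function of `|s - t|`. -/
lemma lorentz_orbit (i : Fin n) (x y : Fin n → ℝ) (s t : ℝ) :
    lorentz (orbit i x s) (orbit i y t) = axisRadius i x * axisRadius i y * cosh (s - t)
      - ∑ j ∈ Finset.univ.erase i, x j * y j := by
  have h : ∑ j, orbit i x s j * orbit i y t j = axisRadius i x * sinh s * (axisRadius i y * sinh t)
      + ∑ j ∈ Finset.univ.erase i, x j * y j := by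
    rw [← Finset.add_sum_erase _ _ (Finset.mem_univ i)]
    congr 1
    · simp [orbit]
    · refine Finset.sum_congr rfl fun j hj => ?_
      simp only [orbit]
      rw [Function.update_of_ne (Finset.ne_of_mem_erase hj),
        Function.update_of_ne (Finset.ne_of_mem_erase hj)]
  rw [lorentz, h, height_orbit, height_orbit, cosh_sub]
  ring

/-! ### Symmetrization preserves volume -/

lemma measurable_weight_s2 {X : Set (Fin n → ℝ)} (hX : MeasurableSet X) :
    Measurable (X.indicator fun x => ENNReal.ofReal (height x)⁻¹) :=
  (ENNReal.measurable_ofReal.comp measurable_height.inv).indicator hX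

/-- In the coordinates `(t, (x_j)_{j ≠ i})` the hyperbolic volume is Lebesgue measure, since
`dx_i / x₀ = dt`. -/
lemma lmarginal_weight {X : Set (Fin n → ℝ)} (hX : MeasurableSet X) (i : Fin n) :
    (∫⋯∫⁻_{i}, X.indicator (fun x => ENNReal.ofReal (height x)⁻¹) ∂fun _ => volume) =
      fun x => volume (orbitSlice X i x) := by
  rw [lmarginal_singleton]
  ext x
  have hr := axisRadius_pos i x
  have hinj : Function.Injective fun t => axisRadius i x * sinh t := fun a b h =>
    sinh_injective (mul_left_cancel₀ hr.ne' h)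
  have hsurj : (fun t => axisRadius i x * sinh t) '' univ = univ := by
    rw [image_univ, range_eq_univ]
    intro s
    obtain ⟨t, ht⟩ := sinh_surjective (s / axisRadius i x)
    exact ⟨t, by simp only [ht]; field_simp⟩
  have hcv := lintegral_image_eq_lintegral_abs_deriv_mul (s := univ) MeasurableSet.univ
    (fun t _ => ((hasDerivAt_sinh t).const_mul (axisRadius i x)).hasDerivWithinAt) hinj.injOn
    (fun s => X.indicator (fun x => ENNReal.ofReal (height x)⁻¹) (Function.update x i s))
  rw [hsurj, Measure.restrict_univ] at hcv
  rw [hcv]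
  have hmeas : MeasurableSet (orbitSlice X i x) := by
    refine hX.preimage ?_
    exact (measurable_update x).comp (measurable_sinh.const_mul _)
  rw [← lintegral_indicator_one hmeas]
  refine lintegral_congr fun t => ?_
  by_cases ht : orbit i x t ∈ X
  · have hc : 0 < axisRadius i x * cosh t := mul_pos hr (cosh_pos t)
    rw [indicator_of_mem (by exact ht), indicator_of_mem (by exact ht), Pi.one_apply,
      ← ENNReal.ofReal_mul (abs_nonneg _), ← ENNReal.ofReal_one]
    congr 1
    have := height_orbit i x t
    rw [orbit] at this
    rw [this, abs_of_pos hc, mul_inv_cancel₀ hc.ne']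
  · rw [indicator_of_notMem (by exact ht), indicator_of_notMem (by exact ht), mul_zero]

lemma measurable_volume_orbitSlice {X : Set (Fin n → ℝ)} (hX : MeasurableSet X) (i : Fin n) :
    Measurable fun x => volume (orbitSlice X i x) := by
  rw [← lmarginal_weight hX i]
  exact (measurable_weight_s2 hX).lmarginal _

lemma measurableSet_symmetrize {X : Set (Fin n → ℝ)} (hX : MeasurableSet X) (i : Fin n) :
    MeasurableSet (symmetrize i X) :=
  measurableSet_lt
    (ENNReal.measurable_ofReal.comp
      ((continuous_abs.measurable.comp (measurable_axisCoord i)).const_mul 2))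
    (measurable_volume_orbitSlice hX i)

lemma volume_two_mul_abs_lt (m : ENNReal) :
    volume {t : ℝ | ENNReal.ofReal (2 * |t|) < m} = m := by
  induction m with
  | top => simp [ENNReal.mul_lt_top_iff]
  | coe m =>
    have : {t : ℝ | ENNReal.ofReal (2 * |t|) < (m : ENNReal)} = Ioo (-(m / 2 : ℝ)) (m / 2) := by
      ext t
      rw [mem_ofPred_eq, ENNReal.ofReal_lt_coe_iff (by positivity), mem_Ioo, ← abs_lt]
      constructor <;> intro h <;> linarith
    rw [this, volume_Ioo]
    ring_nf
    simp

lemma hyperboloidVol_symmetrize {X : Set (Fin n → ℝ)} (hX : MeasurableSet X) (i : Fin n) :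
    hyperboloidVol (symmetrize i X) = hyperboloidVol X := by
  refine lintegral_eq_of_lmarginal_eq {i} (measurable_weight_s2 (measurableSet_symmetrize hX i))
    (measurable_weight_s2 hX) ?_
  rw [lmarginal_weight (measurableSet_symmetrize hX i), lmarginal_weight hX]
  ext x
  have : orbitSlice (symmetrize i X) i x =
      {t : ℝ | ENNReal.ofReal (2 * |t|) < volume (orbitSlice X i x)} := by
    ext t
    change ENNReal.ofReal (2 * |axisCoord i (orbit i x t)|) < volume (orbitSlice X i (orbit i x t))
      ↔ _
    rw [axisCoord_orbit]
    simp [orbit]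
  rw [this, volume_two_mul_abs_lt]

/-! ### Symmetrization does not increase the diameter -/

/-- Centred intervals minimize the maximal distance between points of two sets of prescribed measures:
otherwise `sup A - inf B` and `sup B - inf A` would both be at most `|s - t| ≤ |s| + |t|`, whereas
their sum is at least the sum of the measures of `A` and `B`. -/
lemma exists_abs_sub_le {A B : Set ℝ} {s t : ℝ} (hs : ENNReal.ofReal (2 * |s|) < volume A)
    (ht : ENNReal.ofReal (2 * |t|) < volume B) : ∃ a ∈ A, ∃ b ∈ B, |s - t| ≤ |a - b| := by
  by_contra! h
  have hA : A.Nonempty := nonempty_of_measure_ne_zero (bot_le.trans_lt hs).ne'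
  have hB : B.Nonempty := nonempty_of_measure_ne_zero (bot_le.trans_lt ht).ne'
  set L := |s - t| with hL
  obtain ⟨a₀, ha₀⟩ := hA
  obtain ⟨b₀, hb₀⟩ := hB
  have bA : BddAbove A := ⟨b₀ + L, fun a ha => by linarith [(abs_lt.1 (h a ha b₀ hb₀)).2]⟩
  have bA' : BddBelow A := ⟨b₀ - L, fun a ha => by linarith [(abs_lt.1 (h a ha b₀ hb₀)).1]⟩
  have bB : BddAbove B := ⟨a₀ + L, fun b hb => by linarith [(abs_lt.1 (h a₀ ha₀ b hb)).1]⟩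
  have bB' : BddBelow B := ⟨a₀ - L, fun b hb => by linarith [(abs_lt.1 (h a₀ ha₀ b hb)).2]⟩
  have h1 : sSup A ≤ sInf B + L := csSup_le ⟨a₀, ha₀⟩ fun a ha => by
    have : a - L ≤ sInf B := le_csInf ⟨b₀, hb₀⟩ fun b hb => by
      linarith [(abs_lt.1 (h a ha b hb)).2]
    linarith
  have h2 : sSup B ≤ sInf A + L := csSup_le ⟨b₀, hb₀⟩ fun b hb => by
    have : b - L ≤ sInf A := le_csInf ⟨a₀, ha₀⟩ fun a ha => by
      linarith [(abs_lt.1 (h a ha b hb)).1]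
    linarith
  have vol : ∀ C : Set ℝ, BddAbove C → BddBelow C → volume C ≤ ENNReal.ofReal (sSup C - sInf C) :=
    fun C h₁ h₂ => by
      rw [← volume_Icc]
      exact measure_mono (subset_Icc_csInf_csSup h₂ h₁)
  have h3 := (ENNReal.ofReal_lt_ofReal_iff_of_nonneg (by positivity)).1 (hs.trans_le (vol A bA bA'))
  have h4 := (ENNReal.ofReal_lt_ofReal_iff_of_nonneg (by positivity)).1 (ht.trans_le (vol B bB bB'))
  have h5 : L ≤ |s| + |t| := abs_sub s t
  linarith

lemma lorentz_symmetrize_le {X : Set (Fin n → ℝ)} (i : Fin n) {C : ℝ}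
    (hC : ∀ x ∈ X, ∀ y ∈ X, lorentz x y ≤ C) :
    ∀ x ∈ symmetrize i X, ∀ y ∈ symmetrize i X, lorentz x y ≤ C := by
  intro x hx y hy
  obtain ⟨a, ha, b, hb, hab⟩ := exists_abs_sub_le hx hy
  refine le_trans ?_ (hC _ ha _ hb)
  rw [← orbit_axisCoord i x, ← orbit_axisCoord i y, lorentz_orbit, orbit_axisCoord, orbit_axisCoord,
    lorentz_orbit]
  have := mul_pos (axisRadius_pos i x) (axisRadius_pos i y)
  have := mul_le_mul_of_nonneg_left (cosh_le_cosh.2 hab) this.le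
  linarith

/-! ### Reflection symmetries -/

lemma height_reflect (j : Fin n) (x : Fin n → ℝ) : height (reflect j x) = height x := by
  have h : height x = height (Function.update x j (x j)) := by rw [Function.update_eq_self]
  rw [h, reflect, height_update, height_update, neg_sq]

lemma reflect_mem_symmetrize_self (i : Fin n) (X : Set (Fin n → ℝ)) :
    ∀ x ∈ symmetrize i X, reflect i x ∈ symmetrize i X := by
  intro x hx
  simpa [symmetrize, reflect, axisCoord, neg_div] using hx

/-- Symmetrization along the `i`-th axis keeps the reflection symmetries in the other coordinates, so
that the symmetries gained by successive symmetrizations accumulate. -/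
lemma reflect_mem_symmetrize {i j : Fin n} (hij : j ≠ i) {X : Set (Fin n → ℝ)}
    (hX : ∀ x ∈ X, reflect j x ∈ X) :
    ∀ x ∈ symmetrize i X, reflect j x ∈ symmetrize i X := by
  intro x hx
  have hupd : ∀ s, Function.update (reflect j x) i s = reflect j (Function.update x i s) := by
    intro s
    rw [reflect, reflect, Function.update_comm hij, Function.update_of_ne hij]
  have hrad : axisRadius i (reflect j x) = axisRadius i x := by
    rw [axisRadius, hupd, height_reflect, axisRadius]
  have hcoord : axisCoord i (reflect j x) = axisCoord i x := by
    rw [axisCoord, hrad, reflect, Function.update_of_ne hij.symm, axisCoord]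
  have hsub : orbitSlice X i x ⊆ orbitSlice X i (reflect j x) := fun t ht => by
    change orbit i (reflect j x) t ∈ X
    rw [orbit, hupd, hrad]
    exact hX _ ht
  change ENNReal.ofReal (2 * |axisCoord i (reflect j x)|) < volume (orbitSlice X i (reflect j x))
  rw [hcoord]
  exact lt_of_lt_of_le hx (measure_mono hsub)

lemma exists_symmetric (s : Finset (Fin n)) {X : Set (Fin n → ℝ)} (hX : MeasurableSet X) {C : ℝ}
    (hC : ∀ x ∈ X, ∀ y ∈ X, lorentz x y ≤ C) :
    ∃ Y : Set (Fin n → ℝ), MeasurableSet Y ∧ (∀ x ∈ Y, ∀ y ∈ Y, lorentz x y ≤ C) ∧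
      hyperboloidVol Y = hyperboloidVol X ∧ ∀ j ∈ s, ∀ x ∈ Y, reflect j x ∈ Y := by
  induction s using Finset.induction_on with
  | empty => exact ⟨X, hX, hC, rfl, by simp⟩
  | insert i s hi ih =>
    obtain ⟨Y, hY, hYC, hYv, hYs⟩ := ih
    refine ⟨symmetrize i Y, measurableSet_symmetrize hY i, lorentz_symmetrize_le i hYC,
      (hyperboloidVol_symmetrize hY i).trans hYv, fun j hj => ?_⟩
    rcases eq_or_ne j i with rfl | hji
    · exact reflect_mem_symmetrize_self j Y
    · exact reflect_mem_symmetrize hji (hYs j (Finset.mem_of_mem_insert_of_ne hj hji))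

lemma neg_mem_of_reflect {Y : Set (Fin n → ℝ)} (hY : ∀ j, ∀ x ∈ Y, reflect j x ∈ Y) :
    ∀ x ∈ Y, -x ∈ Y := by
  intro x hx
  have key : ∀ s : Finset (Fin n), (fun j => if j ∈ s then -x j else x j) ∈ Y := by
    intro s
    induction s using Finset.induction_on with
    | empty => simpa using hx
    | insert i s hi ih =>
      convert hY i _ ih using 1
      ext j
      rcases eq_or_ne j i with rfl | hji
      · simp [reflect, hi]
      · simp [reflect, hji]
  have h := key Finset.univ
  simp only [Finset.mem_univ, if_true] at h
  exact h

/-- The isodiametric inequality on the hyperboloid. A set invariant under `x ↦ -x` with diameter at most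
`2r` lies in the ball of radius `r` about the origin, because `d(x, -x) = 2 d(x, 0)`. -/
lemma hyperboloidVol_le {X : Set (Fin n → ℝ)} (hX : MeasurableSet X) {r : ℝ}
    (hC : ∀ x ∈ X, ∀ y ∈ X, lorentz x y ≤ cosh (2 * r)) :
    hyperboloidVol X ≤ hyperboloidVol {x : Fin n → ℝ | ∑ j, x j ^ 2 ≤ sinh r ^ 2} := by
  obtain ⟨Y, -, hYC, hYv, hYs⟩ := exists_symmetric Finset.univ hX hC
  rw [← hYv]
  refine lintegral_mono (indicator_le_indicator_of_subset (fun x hx => ?_) fun _ => bot_le)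
  have h := hYC x hx (-x) (neg_mem_of_reflect (fun j => hYs j (Finset.mem_univ j)) x hx)
  have hh : height (-x) = height x := by simp [height]
  have hs : ∑ j, x j * (-x) j = -∑ j, x j ^ 2 := by
    rw [← Finset.sum_neg_distrib]
    exact Finset.sum_congr rfl fun j _ => by simp; ring
  rw [lorentz, hh, hs, ← sq, height_sq, cosh_two_mul, cosh_sq] at h
  change ∑ j, x j ^ 2 ≤ sinh r ^ 2
  linarith

/-! ### The Klein model -/

/-- The central projection `x ↦ x / x₀` of the hyperboloid onto the Klein ball. -/
def klein (x : Fsp n) : Fsp n := (√(1 + ‖x‖ ^ 2))⁻¹ • x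

lemma one_sub_norm_klein_sq (x : Fsp n) :
    1 - ‖klein x‖ ^ 2 = ((√(1 + ‖x‖ ^ 2))⁻¹) ^ 2 := by
  have h : 0 < 1 + ‖x‖ ^ 2 := by positivity
  rw [klein, norm_smul, mul_pow, norm_inv, norm_eq_abs, inv_pow, inv_pow, sq_abs, sq_sqrt h.le]
  field_simp
  ring

lemma klein_norm_lt_one (x : Fsp n) : ‖klein x‖ < 1 := by
  have h : 0 < 1 - ‖klein x‖ ^ 2 := by
    rw [one_sub_norm_klein_sq]; positivity
  nlinarith [norm_nonneg (klein x)]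

lemma klein_injective : Function.Injective (klein : Fsp n → Fsp n) := by
  intro x y h
  have hc : (√(1 + ‖x‖ ^ 2))⁻¹ = (√(1 + ‖y‖ ^ 2))⁻¹ := by
    rw [← sq_eq_sq₀ (by positivity) (by positivity), ← one_sub_norm_klein_sq,
      ← one_sub_norm_klein_sq, h]
  rw [klein, klein, hc] at h
  exact smul_right_injective _ (by positivity) h

lemma exists_klein_eq {k : Fsp n} (hk : ‖k‖ < 1) : ∃ x, klein x = k := by
  have h : 0 < 1 - ‖k‖ ^ 2 := by nlinarith [norm_nonneg k]
  have hs : √(1 - ‖k‖ ^ 2) ≠ 0 := (sqrt_pos.2 h).ne'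
  refine ⟨(√(1 - ‖k‖ ^ 2))⁻¹ • k, ?_⟩
  have : 1 + ‖(√(1 - ‖k‖ ^ 2))⁻¹ • k‖ ^ 2 = (1 - ‖k‖ ^ 2)⁻¹ := by
    rw [norm_smul, mul_pow, norm_inv, norm_eq_abs, inv_pow, sq_abs, sq_sqrt h.le]
    field_simp
    ring
  rw [klein, this, sqrt_inv, inv_inv, smul_smul, mul_inv_cancel₀ hs, one_smul]

/-- The derivative `h ↦ h / x₀ - (⟨x, h⟩ / x₀³) x` of `klein` at `x`. -/
def kleinDeriv (x : Fsp n) : Fsp n →L[ℝ] Fsp n :=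
  (√(1 + ‖x‖ ^ 2))⁻¹ • ContinuousLinearMap.id ℝ (Fsp n) +
    ((-((√(1 + ‖x‖ ^ 2))⁻¹) ^ 3) • innerSL ℝ x).smulRight x

lemma hasFDerivAt_klein (x : Fsp n) : HasFDerivAt klein (kleinDeriv x) x := by
  have h : 0 < 1 + ‖x‖ ^ 2 := by positivity
  have h1 : HasFDerivAt (fun y : Fsp n => 1 + ‖y‖ ^ 2) (2 • innerSL ℝ x) x :=
    (hasStrictFDerivAt_norm_sq x).hasFDerivAt.const_add 1
  have h2 : HasDerivAt (fun u : ℝ => (√u)⁻¹) (-(1 / (2 * √(1 + ‖x‖ ^ 2))) / √(1 + ‖x‖ ^ 2) ^ 2)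
      (1 + ‖x‖ ^ 2) := (hasDerivAt_sqrt h.ne').inv (sqrt_pos.2 h).ne'
  have h3 := (h2.comp_hasFDerivAt x h1).smul (hasFDerivAt_id x)
  refine h3.congr_fderiv ?_
  rw [kleinDeriv]
  congr 2
  rw [ofNat_smul_eq_nsmul ℝ 2 (innerSL ℝ x) |>.symm, smul_smul]
  congr 1
  field_simp

/-- The Jacobian of `klein` is `x₀ ^ (-(n + 2))`, by the determinant of a rank-one perturbation. -/
lemma det_kleinDeriv (x : Fsp n) :
    (kleinDeriv x).det = ((√(1 + ‖x‖ ^ 2))⁻¹) ^ (n + 2) := by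
  set c := (√(1 + ‖x‖ ^ 2))⁻¹ with hc
  have hpos : 0 < 1 + ‖x‖ ^ 2 := by positivity
  have hc2 : c ^ 2 * (1 + ‖x‖ ^ 2) = 1 := by
    rw [hc, inv_pow, sq_sqrt hpos.le, inv_mul_cancel₀ hpos.ne']
  have h : (kleinDeriv x : Fsp n →ₗ[ℝ] Fsp n) =
      c • LinearMap.transvection ((-c ^ 2) • (innerSL ℝ x : Fsp n →ₗ[ℝ] ℝ)) x := by
    ext1 v
    simp [kleinDeriv, LinearMap.transvection, ← hc, smul_smul]
    rw [← mul_assoc, ← pow_succ']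
  rw [ContinuousLinearMap.det, h, LinearMap.det_smul, LinearMap.transvection.det]
  simp
  linear_combination (-c ^ n) * hc2

lemma sqrt_one_add_norm_sq (x : Fin n → ℝ) : √(1 + ‖WithLp.toLp 2 x‖ ^ 2) = height x := by
  rw [EuclideanSpace.real_norm_sq_eq, height]

lemma hypVol_eq {S : Set (Fsp n)} (hS : MeasurableSet S) (hS1 : ∀ x ∈ S, ‖x‖ < 1) :
    hypVol n S = hyperboloidVol {x | klein (WithLp.toLp 2 x) ∈ S} := by
  have hkm : Measurable (klein : Fsp n → Fsp n) := by unfold klein; fun_prop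
  have hpre : MeasurableSet (klein ⁻¹' S) := hkm hS
  have himg : klein '' (klein ⁻¹' S) = S := by
    rw [image_preimage_eq_iff]
    exact fun k hk => exists_klein_eq (hS1 k hk)
  rw [hypVol, withDensity_apply _ hS, ← himg,
    lintegral_image_eq_lintegral_abs_det_fderiv_mul volume hpre
      (fun x _ => (hasFDerivAt_klein x).hasFDerivWithinAt) klein_injective.injOn,
    himg, ← lintegral_indicator hpre, hyperboloidVol,
    ← (PiLp.volume_preserving_toLp (Fin n)).lintegral_comp_emb
      (MeasurableEquiv.toLp 2 (Fin n → ℝ)).measurableEmbedding]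
  refine lintegral_congr fun x => ?_
  by_cases hx : klein (WithLp.toLp 2 x) ∈ S
  · rw [indicator_of_mem (by exact hx), indicator_of_mem (by exact hx), det_kleinDeriv,
      one_sub_norm_klein_sq, ← ENNReal.ofReal_mul (abs_nonneg _)]
    rw [sqrt_one_add_norm_sq]
    congr 1
    have hc : 0 < (height x)⁻¹ := inv_pos.2 (height_pos x)
    generalize (height x)⁻¹ = c at hc
    rw [abs_of_pos (by positivity), ← rpow_natCast, ← rpow_natCast, ← rpow_mul hc.le, ← rpow_add hc]
    convert rpow_one c using 2
    push_cast
    ring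
  · rw [indicator_of_notMem (by exact hx), indicator_of_notMem (by exact hx)]

lemma hypDist_klein_le {x y : Fin n → ℝ} {D : ℝ} (hD : 0 ≤ D)
    (h : hypDist (klein (WithLp.toLp 2 x)) (klein (WithLp.toLp 2 y)) ≤ D) :
    lorentz x y ≤ cosh D := by
  have hq : (1 - inner ℝ (klein (WithLp.toLp 2 x)) (klein (WithLp.toLp 2 y))) /
      √((1 - ‖klein (WithLp.toLp 2 x)‖ ^ 2) * (1 - ‖klein (WithLp.toLp 2 y)‖ ^ 2)) =
        lorentz x y := by
    have hx := height_pos x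
    have hy := height_pos y
    rw [one_sub_norm_klein_sq, one_sub_norm_klein_sq, ← mul_pow, sqrt_sq (by positivity), klein,
      klein, inner_smul_left, inner_smul_right, sqrt_one_add_norm_sq,
      sqrt_one_add_norm_sq, lorentz, PiLp.inner_apply]
    simp only [RCLike.inner_apply, conj_trivial]
    simp only [mul_comm (y _)]
    field_simp
  have hpos : 0 < lorentz x y := by
    rw [← hq]
    have h1 := klein_norm_lt_one (WithLp.toLp 2 x)
    have h2 := klein_norm_lt_one (WithLp.toLp 2 y)
    refine div_pos ?_ (sqrt_pos.2 (mul_pos ?_ ?_))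
    · have := real_inner_le_norm (klein (WithLp.toLp 2 x)) (klein (WithLp.toLp 2 y))
      have := mul_lt_one_of_nonneg_of_lt_one_left (norm_nonneg _) h1 h2.le
      linarith
    · rw [one_sub_norm_klein_sq]; positivity
    · rw [one_sub_norm_klein_sq]; positivity
  rw [hypDist, hq] at h
  -- the root-level `arcosh` has the same defining formula as `Real.arcosh`
  change Real.arcosh _ ≤ D at h
  rwa [← Real.arcosh_cosh hD, Real.arcosh_le_arcosh hpos (cosh_pos D)] at h

lemma norm_klein_le_tanh {x : Fin n → ℝ} {r : ℝ} (hr : 0 ≤ r) (hx : ∑ j, x j ^ 2 ≤ sinh r ^ 2) :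
    ‖klein (WithLp.toLp 2 x)‖ ≤ tanh r := by
  have ht : 0 ≤ tanh r := by
    rw [tanh_eq_sinh_div_cosh]
    exact div_nonneg (sinh_nonneg_iff.2 hr) (cosh_pos r).le
  have h1 := one_sub_norm_klein_sq (WithLp.toLp 2 x)
  rw [EuclideanSpace.real_norm_sq_eq (WithLp.toLp 2 x), inv_pow, sq_sqrt (by positivity)] at h1
  have h2 : tanh r ^ 2 = 1 - (1 + sinh r ^ 2)⁻¹ := by
    rw [tanh_eq_sinh_div_cosh, div_pow, cosh_sq']
    field_simp
    ring
  have h3 : (1 + sinh r ^ 2)⁻¹ ≤ (1 + ∑ j, x j ^ 2)⁻¹ := by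
    gcongr
  refine (sq_le_sq₀ (norm_nonneg _) ht).1 ?_
  have h4 : 1 - ‖klein (WithLp.toLp 2 x)‖ ^ 2 = (1 + ∑ j, x j ^ 2)⁻¹ := h1
  linarith

end Helpers

/-- hyperbolic isodiametric inequality (Klein model). -/
theorem hyperbolic_isodiametric (n : ℕ) (hn : 2 ≤ n) (D : ℝ) (hD : 0 < D)
    (X : Set (Fsp n)) (hX : ∀ x ∈ X, ‖x‖ < 1) (hXm : MeasurableSet X)
    (hdiam : ∀ x ∈ X, ∀ y ∈ X, hypDist x y ≤ D) :
    hypVol n X ≤ hypVol n {x : Fsp n | ‖x‖ ≤ Real.tanh (D / 2)} := by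
  have hkm : Measurable fun x : Fin n → ℝ => klein (WithLp.toLp 2 x) := by
    unfold klein; fun_prop
  have hball : MeasurableSet {x : Fsp n | ‖x‖ ≤ Real.tanh (D / 2)} :=
    measurableSet_le measurable_norm measurable_const
  rw [hypVol_eq hXm hX, hypVol_eq hball fun x hx => lt_of_le_of_lt hx (Real.tanh_lt_one _)]
  refine (hyperboloidVol_le (r := D / 2) (hkm hXm) fun x hx y hy => ?_).trans ?_
  · rw [mul_div_cancel₀ D two_ne_zero]
    exact hypDist_klein_le hD.le (hdiam _ hx _ hy)
  · refine lintegral_mono (Set.indicator_le_indicator_of_subset (fun x hx => ?_) fun _ => bot_le)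
    exact norm_klein_le_tanh (by positivity) hx
end
end
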